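/- arXiv:2503.04532 — 2 statements merged into one kernel-verified Lean document; each statement's English description precedes it below -/
import Mathlib

section
/- The family of symmetric products of closed non-orientable surfaces is LS-logarithmic: for every integer k ≥ 1 and all pairs of integers (n_1,g_1),…,(n_k,g_k) with n_j ≥ 1 and g_j ≥ 1, one has cat(SP^{n_1}(N_{g_1}) × ⋯ × SP^{n_k}(N_{g_k})) = Σ_{j=1}^k cat(SP^{n_j}(N_{g_j})). In particular, cat((SP^n(N_g))^m) = m·cat(SP^n(N_g)) = 2mn for all m, n, g ≥ 1. -/
open scoped unitInterval Topology
open MeasureTheory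
noncomputable section

/-- The `n`-th symmetric product relation on `X^n`: two tuples are related iff they
differ by a permutation of coordinates. -/
def spRel (n : ℕ) (X : Type*) (s t : Fin n → X) : Prop :=
  ∃ e : Equiv.Perm (Fin n), s ∘ e = t

/-- The `n`-th symmetric product of a topological space `X`: the quotient of the
product space `X^n` by the permutation action of the symmetric group `S_n`,
equipped with the quotient topology. -/
def SP (n : ℕ) (X : Type*) [TopologicalSpace X] : Type _ :=
  Quot (spRel n X)

instance (n : ℕ) (X : Type*) [TopologicalSpace X] : TopologicalSpace (SP n X) :=
  inferInstanceAs (TopologicalSpace (Quot (spRel n X)))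

/-- The inclusion of a subset, as a continuous map. -/
def inclMap {X : Type*} [TopologicalSpace X] (U : Set X) : C(U, X) :=
  ⟨Subtype.val, continuous_subtype_val⟩

/-- `catLE X r` : `X` is covered by `r+1` open sets, each of whose inclusion maps
into `X` is null-homotopic. -/
def catLE (X : Type*) [TopologicalSpace X] (r : ℕ) : Prop :=
  ∃ U : Fin (r + 1) → Set X, (∀ i, IsOpen (U i)) ∧ (⋃ i, U i) = Set.univ ∧
    ∀ i, (inclMap (U i)).Nullhomotopic

/-- The Lusternik–Schnirelmann category of `X`, valued in `ℕ∞`. -/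
def LScat (X : Type*) [TopologicalSpace X] : ℕ∞ :=
  sInf {c : ℕ∞ | ∃ r : ℕ, catLE X r ∧ c = r}

/-- The closed unit disc (a topological model for a polygon). -/
abbrev Disc : Type := {z : ℂ // ‖z‖ ≤ 1}

/-- The point at parameter `t ∈ [0,1]` on the `k`-th of the `N` boundary edges of an
`N`-gon, realized as the closed unit disc whose boundary circle is divided into `N` arcs. -/
def polyBP (N k : ℕ) (t : ℝ) : ℂ :=
  Complex.exp (2 * Real.pi * Complex.I * (((k : ℝ) + t) / (N : ℝ)))

/-- Boundary identifications of the `2g`-gon for the edge word `e₁²e₂²⋯e_g²` :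
the point at parameter `t` on edge `2j` is glued to the point at parameter `t`
on edge `2j+1`. -/
def nonorientRel (g : ℕ) (z w : Disc) : Prop :=
  ∃ j : Fin g, ∃ t : ℝ, 0 ≤ t ∧ t ≤ 1 ∧
    (z : ℂ) = polyBP (2 * g) (2 * (j : ℕ)) t ∧
    (w : ℂ) = polyBP (2 * g) (2 * (j : ℕ) + 1) t

/-- The closed non-orientable surface of genus `g ≥ 1` : the quotient of the `2g`-gon
by the boundary edge word `e₁²e₂²⋯e_g²`. -/
def Ng (g : ℕ) : Type := Quot (nonorientRel g)

instance (g : ℕ) : TopologicalSpace (Ng g) :=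
  inferInstanceAs (TopologicalSpace (Quot (nonorientRel g)))

/-!
The upper bound `2 ∑ nⱼ`. Each surface carries two height functions. Counting those which exceed a
threshold decomposes the surface into three overlapping strata (the threshold may depend on the
point), and these collapse to the corner of the polygon, to the midpoints of its edges and to its
centre. A configuration of `∑ nⱼ` points has `2 ∑ nⱼ` heights; counting them with a common threshold
yields `2 ∑ nⱼ + 1` open sets, and each of them is null-homotopic, since every point of the
configuration can be moved by the collapse of its own stratum.

The lower bound. Collapsing all but one of the letters `eᵢ` maps the surface to the projective
plane, whose `n`-th symmetric product is a projective space; this gives a double cover of every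
`SPⁿ(N_g)`. It is described by the mod 2 gauge sum, which counts the points of a configuration
lying on the second edge of the polygon. Over a null-homotopic open set the cover is trivial: a
correction by a function on the product makes the gauge sum constant on small connected sets. Label
the edges of the simplices of a fine subdivision by their positions `t < 2 ∑ nⱼ`. If `2 ∑ nⱼ` such
sets covered the product, then, correcting along the `t`-th edges for the `t`-th set, every simplex
would have an edge with corrected difference zero. However, the mod 2 number of simplices all of
whose edge differences are nonzero, a cup product of 1-cochains evaluated on the fundamental cycle,
does not depend on the corrections, and without them it is one.
-/

/-! ### Lusternik–Schnirelmann category -/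

section Category

variable {X Y : Type*} [TopologicalSpace X] [TopologicalSpace Y]

lemma LScat_eq_coe {r : ℕ} (h : catLE X r) (hmin : ∀ s, catLE X s → r ≤ s) :
    LScat X = r := by
  refine le_antisymm (sInf_le ⟨r, h, rfl⟩) (le_sInf ?_)
  rintro _ ⟨s, hs, rfl⟩
  exact_mod_cast hmin s hs

lemma catLE.of_homeomorph (e : X ≃ₜ Y) {r : ℕ} : catLE X r → catLE Y r := by
  rintro ⟨U, hopen, hcover, hnull⟩
  refine ⟨fun i ↦ e.symm ⁻¹' U i, fun i ↦ (hopen i).preimage e.symm.continuous, ?_, fun i ↦ ?_⟩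
  · rw [← Set.preimage_iUnion, hcover, Set.preimage_univ]
  · let f : C(e.symm ⁻¹' U i, U i) := ⟨fun y ↦ ⟨e.symm y, y.2⟩, by fun_prop⟩
    have hincl : inclMap (e.symm ⁻¹' U i) = ((e : C(X, Y)).comp (inclMap (U i))).comp f := by
      ext y
      simp [inclMap, f]
    rw [hincl]
    exact ((hnull i).comp_right _).comp_left _

lemma LScat_congr (e : X ≃ₜ Y) : LScat X = LScat Y := by
  have h (r : ℕ) : catLE X r ↔ catLE Y r := ⟨.of_homeomorph e, .of_homeomorph e.symm⟩
  simp only [LScat, h]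

lemma nullhomotopic_of_isLocallyConstant [PathConnectedSpace Y] (f : C(X, Y))
    (hf : IsLocallyConstant f) : f.Nullhomotopic := by
  obtain ⟨y₀⟩ := (inferInstance : Nonempty Y)
  let path (y : Y) : C(I, Y) := (PathConnectedSpace.somePath y y₀).toContinuousMap
  have hpath : Continuous fun p : I × X ↦ path (f p.2) p.1 :=
    ContinuousEval.continuous_eval.comp
      (((hf.comp path).continuous.comp continuous_snd).prodMk continuous_fst)
  exact ⟨y₀, ⟨⟨⟨_, hpath⟩, fun x ↦ by simp [path], fun x ↦ by simp [path]⟩⟩⟩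

/-- A homotopy `c` in `X` which starts at the inclusion of `U` and ends at a locally constant map:
it contracts the pieces of `U` to points, each within `X`. The values of `c` outside `U` are
irrelevant. -/
structure IsCollapse (c : I × X → X) (U : Set X) : Prop where
  continuousOn : ContinuousOn c (Set.univ ×ˢ U)
  zero : ∀ x ∈ U, c (0, x) = x
  eventually_one : ∀ x ∈ U, ∀ᶠ x' in 𝓝 x, c (1, x') = c (1, x)

lemma IsCollapse.nullhomotopic [PathConnectedSpace X] {c : I × X → X} {U : Set X}
    (hc : IsCollapse c U) : (inclMap U).Nullhomotopic := by
  have hU : Continuous fun p : I × U ↦ c (p.1, p.2) :=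
    hc.continuousOn.comp_continuous (by fun_prop) fun p ↦ ⟨Set.mem_univ _, p.2.2⟩
  let f : C(U, X) := ⟨fun x ↦ c (1, x), hU.comp (f := fun x : U ↦ ((1 : I), x)) (by fun_prop)⟩
  have hf : IsLocallyConstant f := (IsLocallyConstant.iff_eventually_eq _).2 fun x ↦
    continuous_subtype_val.continuousAt.eventually (hc.eventually_one x x.2)
  obtain ⟨y, hy⟩ := nullhomotopic_of_isLocallyConstant f hf
  exact ⟨y, .trans ⟨⟨⟨_, hU⟩, fun x ↦ hc.zero x x.2, fun _ ↦ rfl⟩⟩ hy⟩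

lemma IsCollapse.exists_of_isQuotientMap {q : Y → X} (hq : Topology.IsQuotientMap q) {U : Set X}
    (hU : IsOpen U) (f : I × Y → X) (hcont : ContinuousOn f (Set.univ ×ˢ (q ⁻¹' U)))
    (hzero : ∀ y ∈ q ⁻¹' U, f (0, y) = q y)
    (hone : ∀ y ∈ q ⁻¹' U, ∀ᶠ y' in 𝓝 y, f (1, y') = f (1, y))
    (hfactor : ∀ t, ∀ y ∈ q ⁻¹' U, ∀ y', q y = q y' → f (t, y) = f (t, y')) :
    ∃ c, IsCollapse c U := by
  let c (p : I × X) : X := f (p.1, Function.surjInv hq.surjective p.2)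
  have hcf (t : I) {y : Y} (hy : q y ∈ U) : c (t, q y) = f (t, y) :=
    (hfactor t y hy _ (Function.surjInv_eq hq.surjective _).symm).symm
  refine ⟨c, ?_, ?_, ?_⟩
  · have hlift : Continuous fun p : I × U ↦ c (p.1, p.2) := by
      refine (hq.restrictPreimage_isOpen hU).continuous_lift_prod_right
        (g := fun p : I × U ↦ c (p.1, p.2)) ?_
      simp only [Set.restrictPreimage_coe]
      refine (hcont.comp_continuous (f := fun p : I × (q ⁻¹' U) ↦ (p.1, (p.2 : Y)))
        (by fun_prop) fun p ↦ ⟨Set.mem_univ _, p.2.2⟩).congr fun p ↦ (hcf p.1 p.2.2).symm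
    rw [continuousOn_iff_continuous_domRestrict]
    exact hlift.comp (f := fun p : (Set.univ ×ˢ U : Set (I × X)) ↦ (p.1.1, (⟨p.1.2, p.2.2⟩ : U)))
      (by fun_prop)
  · intro x hx
    obtain ⟨y, rfl⟩ := hq.surjective x
    rw [hcf 0 hx, hzero y hx]
  · intro x hx
    have hopen : IsOpen {x' | x' ∈ U ∧ c (1, x') = c (1, x)} := by
      refine hq.isOpen_preimage.1 (isOpen_iff_mem_nhds.2 ?_)
      rintro y ⟨hy, hyx⟩
      filter_upwards [hone y hy, (hU.preimage hq.continuous).mem_nhds hy] with y' hy' hU'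
      exact ⟨hU', by rw [hcf 1 hU', hy', ← hcf 1 hy, hyx]⟩
    filter_upwards [hopen.mem_nhds ⟨hx, rfl⟩] with x' hx'
    exact hx'.2

end Category

/-! ### Products of symmetric products -/

namespace SP

variable {n : ℕ} {X : Type*} [TopologicalSpace X]

/-- The unordered tuple `[x₁, …, xₙ]`. -/
def mk (s : Fin n → X) : SP n X := Quot.mk _ s

lemma mk_eq_mk {s t : Fin n → X} : mk s = mk t ↔ ∃ e : Equiv.Perm (Fin n), s ∘ e = t := by
  have hequiv : Equivalence (spRel n X) :=
    ⟨fun _ ↦ ⟨1, rfl⟩, fun ⟨e, h⟩ ↦ ⟨e⁻¹, by simp [← h, Function.comp_assoc]⟩,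
      fun ⟨e, h⟩ ⟨f, h'⟩ ↦ ⟨e * f, by rw [← h', ← h]; rfl⟩⟩
  exact Quot.eq.trans hequiv.eqvGen_iff

lemma isOpenQuotientMap_mk : IsOpenQuotientMap (mk : (Fin n → X) → SP n X) where
  surjective := Quot.mk_surjective
  continuous := continuous_quot_mk
  isOpenMap U hU := by
    have hpre : mk ⁻¹' (mk '' U) = ⋃ e : Equiv.Perm (Fin n), (· ∘ e) ⁻¹' U := by
      ext t
      simp only [Set.mem_preimage, Set.mem_image, Set.mem_iUnion]
      constructor
      · rintro ⟨s, hs, hst⟩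
        obtain ⟨e, rfl⟩ := mk_eq_mk.1 hst.symm
        exact ⟨e, hs⟩
      · rintro ⟨e, he⟩
        exact ⟨_, he, mk_eq_mk.2 ⟨e⁻¹, by ext; simp⟩⟩
    refine (isQuotientMap_quot_mk (r := spRel n X)).isOpen_preimage.1 (hpre ▸ ?_)
    exact isOpen_iUnion fun e ↦ hU.preimage (by fun_prop)

variable {J : Type*} {n : J → ℕ} {Y : J → Type*} [∀ j, TopologicalSpace (Y j)]

/-- The projection `∏ⱼ Yⱼ^{nⱼ} → ∏ⱼ SP^{nⱼ}(Yⱼ)`, the factors of the source being indexed by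
the pairs of a `j` and a position `i < nⱼ`. -/
def prodMk (z : ∀ a : (j : J) × Fin (n j), Y a.1) (j : J) : SP (n j) (Y j) :=
  mk fun i ↦ z ⟨j, i⟩

lemma prodMk_eq_prodMk {z z' : ∀ a : (j : J) × Fin (n j), Y a.1} :
    prodMk z = prodMk z' ↔
      ∃ e : ∀ j, Equiv.Perm (Fin (n j)), ∀ j i, z ⟨j, e j i⟩ = z' ⟨j, i⟩ := by
  simp only [prodMk, funext_iff, mk_eq_mk, Function.comp_apply, Classical.skolem]

lemma isOpenQuotientMap_prodMk :
    IsOpenQuotientMap (prodMk : (∀ a : (j : J) × Fin (n j), Y a.1) → ∀ j, SP (n j) (Y j)) :=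
  let curry : (∀ a : (j : J) × Fin (n j), Y a.1) ≃ₜ ∀ j, Fin (n j) → Y j :=
    { Equiv.piCurry fun j (_ : Fin (n j)) ↦ Y j with
      continuous_toFun := continuous_pi fun j ↦ continuous_pi fun i ↦
        continuous_apply (⟨j, i⟩ : (j : J) × Fin (n j))
      continuous_invFun := continuous_pi fun a ↦
        (continuous_apply a.2).comp (continuous_apply a.1) }
  (IsOpenQuotientMap.piMap fun _ ↦ isOpenQuotientMap_mk).comp curry.isOpenQuotientMap

end SP

/-! ### Polar coordinates on the surface -/

namespace Ng

open Topology

variable {g : ℕ}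

/-- The point of the disc with polar coordinates `x = (r, s)`. The radius is clamped to `[0, 1]`
and the angle is measured in edges of the `2g`-gon, so that the corners of the polygon are the
points `(1, s)` with `s` an integer. -/
def discPoint (g : ℕ) (x : ℝ × ℝ) : Disc :=
  ⟨(Set.projIcc (0 : ℝ) 1 zero_le_one x.1 : ℝ) * Circle.exp (Real.pi * x.2 / g), by
    have hr := (Set.projIcc (0 : ℝ) 1 zero_le_one x.1).2
    rw [norm_mul, Circle.norm_coe, mul_one, Complex.norm_of_nonneg hr.1]
    exact hr.2⟩

/-- Polar coordinates on the surface. -/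
def polar (g : ℕ) (x : ℝ × ℝ) : Ng g := Quot.mk _ (discPoint g x)

/-- The rectangle of polar coordinates covering the polygon once, up to identifications of the
boundary of the rectangle. -/
def rect (g : ℕ) : Set (ℝ × ℝ) := Set.Icc (0 : ℝ) 1 ×ˢ Set.Icc (0 : ℝ) (2 * g)

lemma isCompact_rect : IsCompact (rect g) := isCompact_Icc.prod isCompact_Icc

lemma continuous_discPoint : Continuous (discPoint g) := by
  have := continuous_projIcc (a := (0 : ℝ)) (b := 1) (h := zero_le_one)
  unfold discPoint
  fun_prop

lemma continuous_polar : Continuous (polar g) := continuous_quot_mk.comp continuous_discPoint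

lemma circleExp_eq_circleExp (hg : 1 ≤ g) {s s' : ℝ} :
    Circle.exp (Real.pi * s / g) = Circle.exp (Real.pi * s' / g) ↔
      ∃ m : ℤ, s = s' + m * (2 * g) := by
  have hg₀ : (g : ℝ) ≠ 0 := by positivity
  rw [Circle.exp_eq_exp]
  refine exists_congr fun m ↦ ?_
  have hscale : Real.pi * s' / g + m * (2 * Real.pi) = Real.pi * (s' + m * (2 * g)) / g := by
    field_simp
  rw [hscale, div_left_inj' hg₀, mul_right_inj' Real.pi_ne_zero]

lemma coe_discPoint {x : ℝ × ℝ} (hx : x.1 ∈ Set.Icc (0 : ℝ) 1) :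
    (discPoint g x : ℂ) = x.1 * Circle.exp (Real.pi * x.2 / g) := by
  change ((Set.projIcc (0 : ℝ) 1 zero_le_one x.1 : ℝ) : ℂ) * _ = _
  rw [Set.projIcc_of_mem zero_le_one hx]

lemma norm_discPoint {x : ℝ × ℝ} (hx : x.1 ∈ Set.Icc (0 : ℝ) 1) :
    ‖(discPoint g x : ℂ)‖ = x.1 := by
  rw [coe_discPoint hx, norm_mul, Circle.norm_coe, mul_one, Complex.norm_of_nonneg hx.1]

lemma surjOn_discPoint (hg : 1 ≤ g) : Set.SurjOn (discPoint g) (rect g) Set.univ := by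
  intro z _
  have hperiod : (0 : ℝ) < 2 * g := by positivity
  set s : ℝ := toIcoMod hperiod 0 (g * Complex.arg z / Real.pi) with hs_def
  have hs : s ∈ Set.Ico (0 : ℝ) (2 * g) := toIcoMod_mem_Ico' hperiod _
  have harg : Circle.exp (Real.pi * s / g) = Circle.exp (Complex.arg z) := by
    have hg₀ : (g : ℝ) ≠ 0 := by positivity
    have hcancel : Complex.arg z = Real.pi * (g * Complex.arg z / Real.pi) / g := by field_simp
    rw [hcancel, circleExp_eq_circleExp hg]
    refine ⟨-toIcoDiv hperiod 0 (g * Complex.arg z / Real.pi), ?_⟩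
    rw [hs_def, ← self_sub_toIcoDiv_mul hperiod]
    push_cast
    ring
  refine ⟨(‖(z : ℂ)‖, s), ⟨⟨norm_nonneg _, z.2⟩, hs.1, hs.2.le⟩, Subtype.ext ?_⟩
  rw [coe_discPoint ⟨norm_nonneg _, z.2⟩, harg, Circle.coe_exp, Complex.norm_mul_exp_arg_mul_I]

lemma surjOn_polar (hg : 1 ≤ g) : Set.SurjOn (polar g) (rect g) Set.univ := fun y _ ↦ by
  obtain ⟨z, rfl⟩ := Quot.exists_rep y
  obtain ⟨x, hx, rfl⟩ := surjOn_discPoint hg (Set.mem_univ z)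
  exact ⟨x, hx, rfl⟩

lemma isQuotientMap_polar (hg : 1 ≤ g) : IsQuotientMap fun x : rect g ↦ polar g x := by
  have := isCompact_iff_compactSpace.1 (isCompact_rect (g := g))
  have hcont : Continuous fun x : rect g ↦ discPoint g x :=
    continuous_discPoint.comp continuous_subtype_val
  have hsurj : Function.Surjective fun x : rect g ↦ discPoint g x := fun z ↦
    let ⟨x, hx, hxz⟩ := surjOn_discPoint hg (Set.mem_univ z)
    ⟨⟨x, hx⟩, hxz⟩
  exact (isQuotientMap_quot_mk (r := nonorientRel g)).comp
    (hcont.isClosedMap.isQuotientMap hcont hsurj)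

lemma pathConnectedSpace (hg : 1 ≤ g) : PathConnectedSpace (Ng g) := by
  have hrect : IsPathConnected (rect g) := by
    refine Convex.isPathConnected ((convex_Icc _ _).prod (convex_Icc _ _)) ⟨0, ?_⟩
    exact ⟨⟨le_rfl, zero_le_one⟩, le_rfl, by positivity⟩
  have himage := hrect.image (continuous_polar (g := g))
  rwa [Set.univ_subset_iff.1 (surjOn_polar hg), ← pathConnectedSpace_iff_univ] at himage

lemma polar_zero (s s' : ℝ) : polar g (0, s) = polar g (0, s') :=
  congrArg (Quot.mk _) <| Subtype.ext <| by
    rw [coe_discPoint ⟨le_rfl, zero_le_one⟩, coe_discPoint ⟨le_rfl, zero_le_one⟩]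
    simp

lemma polar_add_period (hg : 1 ≤ g) (r s : ℝ) : polar g (r, s + 2 * g) = polar g (r, s) := by
  have hexp : Circle.exp (Real.pi * (s + 2 * g) / g) = Circle.exp (Real.pi * s / g) :=
    (circleExp_eq_circleExp hg).2 ⟨1, by push_cast; ring⟩
  exact congrArg (Quot.mk _) (Subtype.ext (congrArg (fun z : Circle ↦ (_ * z : ℂ)) hexp))

lemma polyBP_eq_discPoint (k : ℕ) (t : ℝ) :
    polyBP (2 * g) k t = discPoint g (1, k + t) := by
  rw [coe_discPoint ⟨zero_le_one, le_rfl⟩, polyBP, Circle.coe_exp]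
  push_cast
  rw [one_mul]
  congr 1
  ring

lemma polar_add_one {j : ℕ} (hj : j < g) {s : ℝ} (hs : s ∈ Set.Icc (2 * j : ℝ) (2 * j + 1)) :
    polar g (1, s) = polar g (1, s + 1) := by
  refine Quot.sound ⟨⟨j, hj⟩, s - 2 * j, by linarith [hs.1], by linarith [hs.2], ?_, ?_⟩ <;>
  · rw [polyBP_eq_discPoint]
    push_cast
    ring_nf

lemma eq_or_of_discPoint_eq (hg : 1 ≤ g) {x x' : ℝ × ℝ} (hx : x ∈ rect g) (hx' : x' ∈ rect g)
    (h : discPoint g x = discPoint g x') :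
    x.1 = x'.1 ∧ (x.1 = 0 ∨ x.2 = x'.2 ∨ (x.2 = 0 ∧ x'.2 = 2 * g) ∨
      (x.2 = 2 * g ∧ x'.2 = 0)) := by
  have hradius : x.1 = x'.1 := by rw [← norm_discPoint hx.1, h, norm_discPoint hx'.1]
  refine ⟨hradius, or_iff_not_imp_left.2 fun h₀ ↦ ?_⟩
  have hangle := congrArg Subtype.val h
  rw [coe_discPoint hx.1, coe_discPoint hx'.1, ← hradius,
    mul_right_inj' (Complex.ofReal_ne_zero.2 h₀), Circle.coe_inj,
    circleExp_eq_circleExp hg] at hangle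
  obtain ⟨m, hm⟩ := hangle
  obtain ⟨hlo, hhi⟩ := hx.2
  obtain ⟨hlo', hhi'⟩ := hx'.2
  have hg₀ : (1 : ℝ) ≤ g := by exact_mod_cast hg
  have hm_le : m < 2 := by exact_mod_cast (show (m : ℝ) < 2 by nlinarith)
  have hm_ge : -2 < m := by exact_mod_cast (show (-2 : ℝ) < m by nlinarith)
  obtain rfl | rfl | rfl : m = -1 ∨ m = 0 ∨ m = 1 := by omega
  · exact .inr (.inl (by push_cast at hm; constructor <;> linarith))
  · exact .inl (by simpa using hm)
  · exact .inr (.inr (by push_cast at hm; constructor <;> linarith))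

/-- A function of polar coordinates which respects the identifications of the boundary of the
rectangle: the centre of the disc, the wrapping of the angle and the gluing of the edges. -/
structure RespectsGluing {Z : Type*} (g : ℕ) (f : ℝ × ℝ → Z) : Prop where
  zero : ∀ s s', f (0, s) = f (0, s')
  wrap : ∀ r, f (r, 0) = f (r, 2 * g)
  glue : ∀ j < g, ∀ s ∈ Set.Icc (2 * j : ℝ) (2 * j + 1), f (1, s) = f (1, s + 1)

namespace RespectsGluing

variable {Z : Type*} {f : ℝ × ℝ → Z}

lemma exists_lift (hf : RespectsGluing g f) (hg : 1 ≤ g) :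
    ∃ F : Ng g → Z, ∀ x ∈ rect g, F (polar g x) = f x := by
  choose coord hrect hcoord using fun z ↦ surjOn_discPoint hg (Set.mem_univ z)
  have hdisc {x : ℝ × ℝ} (hx : x ∈ rect g) : f (coord (discPoint g x)) = f x := by
    obtain ⟨hr, hs⟩ := eq_or_of_discPoint_eq hg (hrect _) hx (hcoord (discPoint g x))
    generalize coord (discPoint g x) = x' at hr hs
    obtain ⟨r, s⟩ := x
    obtain ⟨r', s'⟩ := x'
    obtain rfl : r' = r := hr
    rcases hs with rfl | rfl | ⟨rfl, rfl⟩ | ⟨rfl, rfl⟩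
    · exact hf.zero _ _
    · rfl
    · exact hf.wrap _
    · exact (hf.wrap _).symm
  have hedge {k : ℕ} (hk : k < 2 * g) {t : ℝ} (h₀ : 0 ≤ t) (h₁ : t ≤ 1) :
      ((1 : ℝ), k + t) ∈ rect g := by
    have : (k + 1 : ℝ) ≤ 2 * g := by exact_mod_cast hk
    exact ⟨⟨zero_le_one, le_rfl⟩, by positivity, by linarith⟩
  refine ⟨Quot.lift (f ∘ coord) ?_, fun x hx ↦ hdisc hx⟩
  rintro z w ⟨j, t, h₀, h₁, hz, hw⟩
  have hz' : z = discPoint g (1, (2 * j : ℕ) + t) :=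
    Subtype.ext (hz.trans (polyBP_eq_discPoint _ _))
  have hw' : w = discPoint g (1, (2 * j + 1 : ℕ) + t) :=
    Subtype.ext (hw.trans (polyBP_eq_discPoint _ _))
  have hj := j.2
  rw [hz', hw', Function.comp_apply, Function.comp_apply, hdisc (hedge (by omega) h₀ h₁),
    hdisc (hedge (by omega) h₀ h₁), hf.glue j j.2]
  · push_cast
    ring_nf
  · push_cast
    constructor <;> linarith

lemma eq_of_polar_eq (hf : RespectsGluing g f) (hg : 1 ≤ g) {x x' : ℝ × ℝ} (hx : x ∈ rect g)
    (hx' : x' ∈ rect g) (h : polar g x = polar g x') : f x = f x' := by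
  obtain ⟨F, hF⟩ := hf.exists_lift hg
  rw [← hF x hx, ← hF x' hx', h]

lemma exists_continuousMap [TopologicalSpace Z] (hf : RespectsGluing g f) (hg : 1 ≤ g)
    (hcont : Continuous f) : ∃ F : C(Ng g, Z), ∀ x ∈ rect g, F (polar g x) = f x := by
  obtain ⟨F, hF⟩ := hf.exists_lift hg
  refine ⟨⟨F, (isQuotientMap_polar hg).continuous_iff.2 ?_⟩, hF⟩
  exact (hcont.comp continuous_subtype_val).congr fun x ↦ (hF x x.2).symm

end RespectsGluing

end Ng

/-! ### An upper bound from stratifications by height functions -/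

section Stratum

variable {D Y : Type*} [Finite D] [TopologicalSpace Y] {h : D → C(Y, ℝ)} {τ : ℝ} {y : Y}

/-- The number of height functions exceeding the threshold `τ` at `y`. -/
def level (h : D → C(Y, ℝ)) (τ : ℝ) (y : Y) : ℕ := {i | τ < h i y}.ncard

/-- A threshold in `(0, 1)` which is not a value of the height functions at `y`. -/
def IsRegularAt (h : D → C(Y, ℝ)) (τ : ℝ) (y : Y) : Prop :=
  τ ∈ Set.Ioo 0 1 ∧ ∀ i, h i y ≠ τ

/-- The points which have level `κ` with respect to some regular threshold. -/
def stratum (h : D → C(Y, ℝ)) (κ : ℕ) : Set Y := {y | ∃ τ, IsRegularAt h τ y ∧ level h τ y = κ}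

lemma level_le_card : level h τ y ≤ Nat.card D := by
  rw [← Set.ncard_univ]
  exact Set.ncard_le_ncard (Set.subset_univ _)

lemma level_antitone (h : D → C(Y, ℝ)) (y : Y) : Antitone fun τ ↦ level h τ y :=
  fun _ _ hle ↦ Set.ncard_le_ncard fun _ hi ↦ hle.trans_lt hi

lemma IsRegularAt.eventually (hτ : IsRegularAt h τ y) :
    ∀ᶠ y' in 𝓝 y, IsRegularAt h τ y' ∧ level h τ y' = level h τ y := by
  have hsame : ∀ᶠ y' in 𝓝 y, ∀ i, h i y' ≠ τ ∧ (τ < h i y' ↔ τ < h i y) := by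
    refine Filter.eventually_all.2 fun i ↦ ?_
    have hcont : Filter.Tendsto (h i) (𝓝 y) (𝓝 (h i y)) := (h i).continuous.continuousAt
    rcases (hτ.2 i).lt_or_gt with hlt | hgt
    · filter_upwards [hcont.eventually_lt_const hlt] with y' hy'
      exact ⟨hy'.ne, iff_of_false hy'.not_gt hlt.not_gt⟩
    · filter_upwards [hcont.eventually_const_lt hgt] with y' hy'
      exact ⟨hy'.ne', iff_of_true hy' hgt⟩
  filter_upwards [hsame] with y' hy'
  exact ⟨⟨hτ.1, fun i ↦ (hy' i).1⟩, by simp only [level, hy']⟩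

lemma isOpen_stratum (κ : ℕ) : IsOpen (stratum h κ) := by
  refine isOpen_iff_mem_nhds.2 ?_
  rintro y ⟨τ, hτ, rfl⟩
  filter_upwards [hτ.eventually] with y' hy'
  exact ⟨τ, hy'⟩

lemma exists_isRegularAt (h : D → C(Y, ℝ)) (y : Y) : ∃ τ, IsRegularAt h τ y := by
  have hinf : (Set.Ioo (0 : ℝ) 1).Infinite := Set.Ioo_infinite zero_lt_one
  obtain ⟨τ, hτ, hval⟩ := (hinf.sdiff (Set.finite_range fun i ↦ h i y)).nonempty
  exact ⟨τ, hτ, fun i hi ↦ hval ⟨i, hi⟩⟩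

variable {A : Type*} {Y : A → Type*} [∀ a, TopologicalSpace (Y a)] {D : A → Type*}
  {h : ∀ a, D a → C(Y a, ℝ)} {z : ∀ a, Y a}

/-- The height functions of all the factors, on the product. -/
def piHeight (h : ∀ a, D a → C(Y a, ℝ)) (i : (a : A) × D a) : C(∀ a, Y a, ℝ) :=
  (h i.1 i.2).comp ⟨_, continuous_apply i.1⟩

lemma isRegularAt_piHeight (hτ : IsRegularAt (piHeight h) τ z) (a : A) :
    IsRegularAt (h a) τ (z a) :=
  ⟨hτ.1, fun i ↦ hτ.2 ⟨a, i⟩⟩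

variable [∀ a, Finite (D a)]

lemma level_piHeight [Fintype A] : level (piHeight h) τ z = ∑ a, level (h a) τ (z a) := by
  classical
  simp only [level, ← Nat.card_coe_set_eq]
  rw [← Nat.card_sigma]
  exact Nat.card_congr ⟨fun i ↦ ⟨i.1.1, i.1.2, i.2⟩, fun i ↦ ⟨⟨i.1, i.2.1⟩, i.2.2⟩,
    fun _ ↦ rfl, fun _ ↦ rfl⟩

/-- Levels are antitone in the threshold, so factorwise they are determined by their sum. -/
lemma level_eq_of_level_piHeight_eq [Finite A] {τ' : ℝ}
    (hsum : level (piHeight h) τ z = level (piHeight h) τ' z) (a : A) :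
    level (h a) τ (z a) = level (h a) τ' (z a) := by
  wlog hle : τ ≤ τ' generalizing τ τ'
  · exact (this hsum.symm (le_of_not_ge hle)).symm
  have := Fintype.ofFinite A
  rw [level_piHeight, level_piHeight, eq_comm,
    Finset.sum_eq_sum_iff_of_le fun a _ ↦ level_antitone (h a) (z a) hle] at hsum
  exact (hsum a (Finset.mem_univ a)).symm

lemma exists_factor_levels [Finite A] (h : ∀ a, D a → C(Y a, ℝ)) (m : ℕ) :
    ∃ κ : (∀ a, Y a) → A → ℕ, ∀ z τ, IsRegularAt (piHeight h) τ z →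
      level (piHeight h) τ z = m → ∀ a, κ z a = level (h a) τ (z a) := by
  classical
  refine ⟨fun z a ↦ if hz : z ∈ stratum (piHeight h) m then level (h a) hz.choose (z a) else 0,
    fun z τ hτ hm a ↦ ?_⟩
  have hz : z ∈ stratum (piHeight h) m := ⟨τ, hτ, hm⟩
  exact (dif_pos hz).trans (level_eq_of_level_piHeight_eq (hz.choose_spec.2.trans hm.symm) a)

lemma eventually_factor_levels_eq [Finite A] {m : ℕ} {κ : (∀ a, Y a) → A → ℕ}
    (hκ : ∀ z τ, IsRegularAt (piHeight h) τ z →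
      level (piHeight h) τ z = m → ∀ a, κ z a = level (h a) τ (z a))
    (hz : z ∈ stratum (piHeight h) m) : ∀ᶠ z' in 𝓝 z, κ z' = κ z := by
  obtain ⟨τ, hτ, hm⟩ := hz
  have hnear (a) : ∀ᶠ z' in 𝓝 z, level (h a) τ (z' a) = level (h a) τ (z a) :=
    (continuous_apply a).continuousAt.eventually
      ((isRegularAt_piHeight hτ a).eventually.mono fun _ ↦ And.right)
  filter_upwards [hτ.eventually, Filter.eventually_all.2 hnear] with z' ⟨hτ', hm'⟩ hlevel
  funext a
  rw [hκ z' τ hτ' (hm'.trans hm), hκ z τ hτ hm, hlevel]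

end Stratum

namespace SP

variable {J : Type*} {n : J → ℕ} {Y : J → Type*} [∀ j, TopologicalSpace (Y j)]
  {D : J → Type*} [∀ j, Finite (D j)] {h : ∀ j, D j → C(Y j, ℝ)}

instance [∀ j, PathConnectedSpace (Y j)] : PathConnectedSpace (∀ j, SP (n j) (Y j)) :=
  isOpenQuotientMap_prodMk.surjective.pathConnectedSpace isOpenQuotientMap_prodMk.continuous

/-- The height functions on the factors of `∏ⱼ Yⱼ^{nⱼ}`. -/
abbrev prodHeight (n : J → ℕ) (h : ∀ j, D j → C(Y j, ℝ)) :
    ((a : (j : J) × Fin (n j)) × D a.1) → C(∀ a : (j : J) × Fin (n j), Y a.1, ℝ) :=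
  piHeight fun a ↦ h a.1

lemma level_congr_of_prodMk_eq [Finite J] {z z' : ∀ a : (j : J) × Fin (n j), Y a.1} (τ : ℝ)
    (hz : prodMk z = prodMk z') :
    level (prodHeight n h) τ z = level (prodHeight n h) τ z' ∧
      (IsRegularAt (prodHeight n h) τ z → IsRegularAt (prodHeight n h) τ z') := by
  obtain ⟨e, he⟩ := prodMk_eq_prodMk.1 hz
  constructor
  · have := Fintype.ofFinite J
    simp only [level_piHeight, Fintype.sum_sigma, ← he]
    exact Finset.sum_congr rfl fun j _ ↦ (Equiv.sum_comp (e j) _).symm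
  · rintro ⟨hτ, hreg⟩
    refine ⟨hτ, fun ⟨⟨j, i⟩, k⟩ ↦ ?_⟩
    exact ne_of_eq_of_ne (congrArg (h j k) (he j i).symm) (hreg ⟨⟨j, e j i⟩, k⟩)

/-- The collapse of a level set of the product moves every point of a tuple by the collapse of
its own stratum. -/
lemma exists_isCollapse_prodMk [Finite J] (c : ∀ j, ℕ → I × Y j → Y j)
    (hc : ∀ j κ, IsCollapse (c j κ) (stratum (h j) κ)) {m : ℕ} {U : Set (∀ j, SP (n j) (Y j))}
    (hU : prodMk ⁻¹' U = stratum (prodHeight n h) m) (hopen : IsOpen U) :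
    ∃ c', IsCollapse c' U := by
  obtain ⟨κ, hκ⟩ := exists_factor_levels (fun a : (j : J) × Fin (n j) ↦ h a.1) m
  let f (p : I × ∀ a : (j : J) × Fin (n j), Y a.1) : ∀ j, SP (n j) (Y j) :=
    prodMk fun a ↦ c a.1 (κ p.2 a) (p.1, p.2 a)
  have hmem : ∀ z ∈ prodMk ⁻¹' U, ∀ a, z a ∈ stratum (h a.1) (κ z a) := by
    rw [hU]
    rintro z ⟨τ, hτ, hm⟩ a
    exact ⟨τ, isRegularAt_piHeight hτ a, (hκ z τ hτ hm a).symm⟩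
  have hlocal : ∀ z ∈ prodMk ⁻¹' U, ∀ᶠ z' in 𝓝 z, κ z' = κ z :=
    hU ▸ fun z hz ↦ eventually_factor_levels_eq hκ hz
  have hq := (isOpenQuotientMap_prodMk (n := n) (Y := Y)).isQuotientMap
  refine IsCollapse.exists_of_isQuotientMap hq hopen f ?_ ?_ ?_ ?_
  · rintro ⟨t, z⟩ ⟨-, hz⟩
    refine ContinuousAt.continuousWithinAt ?_
    have hf : (fun p : I × _ ↦ prodMk fun a ↦ c a.1 (κ z a) (p.1, p.2 a)) =ᶠ[𝓝 (t, z)] f := by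
      filter_upwards [continuous_snd.continuousAt.eventually (hlocal z hz)] with p hp
      simp only [f, hp]
    refine ContinuousAt.congr ?_ hf
    refine isOpenQuotientMap_prodMk.continuous.continuousAt.comp (continuousAt_pi.2 fun a ↦ ?_)
    have hca : ContinuousAt (c a.1 (κ z a)) (t, z a) :=
      (hc a.1 (κ z a)).continuousOn.continuousAt
        ((isOpen_univ.prod (isOpen_stratum _)).mem_nhds ⟨Set.mem_univ _, hmem z hz a⟩)
    exact hca.comp (f := fun p : I × (∀ a : (j : J) × Fin (n j), Y a.1) ↦ (p.1, p.2 a))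
      (by fun_prop)
  · intro z hz
    exact congrArg prodMk (funext fun a ↦ (hc a.1 _).zero _ (hmem z hz a))
  · intro z hz
    have hnear (a) : ∀ᶠ z' in 𝓝 z, c a.1 (κ z a) (1, z' a) = c a.1 (κ z a) (1, z a) :=
      (continuous_apply a).continuousAt.eventually ((hc a.1 _).eventually_one _ (hmem z hz a))
    filter_upwards [hlocal z hz, Filter.eventually_all.2 hnear] with z' hκz hone
    simp only [f, hκz, hone]
  · intro t z hz z' hzz'
    rw [hU] at hz
    obtain ⟨τ, hτ, hm⟩ := hz
    obtain ⟨hlevel, hreg⟩ := level_congr_of_prodMk_eq (h := h) τ hzz'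
    obtain ⟨e, he⟩ := prodMk_eq_prodMk.1 hzz'
    refine prodMk_eq_prodMk.2 ⟨e, fun j i ↦ ?_⟩
    simp only [hκ z τ hτ hm, hκ z' τ (hreg hτ) (hlevel ▸ hm), he]

theorem catLE_prod_of_isCollapse [Fintype J] [∀ j, PathConnectedSpace (Y j)]
    (c : ∀ j, ℕ → I × Y j → Y j) (hc : ∀ j κ, IsCollapse (c j κ) (stratum (h j) κ)) :
    catLE (∀ j, SP (n j) (Y j)) (∑ j, n j * Nat.card (D j)) := by
  let W (m : ℕ) : Set (∀ j, SP (n j) (Y j)) := prodMk '' stratum (prodHeight n h) m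
  have hW (m : ℕ) : prodMk ⁻¹' W m = stratum (prodHeight n h) m := by
    refine Set.Subset.antisymm ?_ (Set.subset_preimage_image _ _)
    rintro z ⟨z', ⟨τ, hτ, hm⟩, hz⟩
    obtain ⟨hlevel, hreg⟩ := level_congr_of_prodMk_eq (h := h) τ hz
    exact ⟨τ, hreg hτ, hlevel ▸ hm⟩
  have hWopen (m : ℕ) : IsOpen (W m) := isOpenQuotientMap_prodMk.isOpenMap _ (isOpen_stratum m)
  refine ⟨fun m ↦ W m, fun m ↦ hWopen m, Set.eq_univ_of_forall fun x ↦ ?_, fun m ↦ ?_⟩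
  · obtain ⟨z, rfl⟩ := isOpenQuotientMap_prodMk.surjective x
    obtain ⟨τ, hτ⟩ := exists_isRegularAt (prodHeight n h) z
    have hcard : Nat.card ((a : (j : J) × Fin (n j)) × D a.1) = ∑ j, n j * Nat.card (D j) := by
      simp [Nat.card_sigma, Fintype.sum_sigma]
    have hle : level (prodHeight n h) τ z ≤ ∑ j, n j * Nat.card (D j) := hcard ▸ level_le_card
    exact Set.mem_iUnion.2 ⟨⟨_, Nat.lt_succ_of_le hle⟩, z, ⟨τ, hτ, rfl⟩, rfl⟩
  · obtain ⟨c', hc'⟩ := exists_isCollapse_prodMk (h := h) c hc (hW m) (hWopen m)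
    exact hc'.nullhomotopic

end SP

/-! ### The strata of the surface -/

namespace Ng

variable {g : ℕ}

/-- The height functions of the surface in polar coordinates. Both are at least `1` at the centre
of the disc; on the boundary the second one vanishes exactly at the corners of the polygon. -/
def polarHeight (i : Fin 2) (x : ℝ × ℝ) : ℝ :=
  ![2 * (1 - x.1), 2 * max (1 - x.1) ‖(x.2 : UnitAddCircle)‖] i

lemma continuous_polarHeight (i : Fin 2) : Continuous (polarHeight i) := by
  fin_cases i
  · exact (by fun_prop : Continuous fun x : ℝ × ℝ ↦ 2 * (1 - x.1))
  · exact (by fun_prop : Continuous fun x : ℝ × ℝ ↦ 2 * max (1 - x.1) ‖(x.2 : UnitAddCircle)‖)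

lemma respectsGluing_polarHeight (i : Fin 2) : RespectsGluing g (polarHeight i) := by
  have hcenter (s : ℝ) : max 1 ‖(s : UnitAddCircle)‖ = 1 := by
    refine max_eq_left ((AddCircle.norm_le_half_period 1 one_ne_zero).trans ?_)
    norm_num
  have hperiod : ((2 * g : ℝ) : UnitAddCircle) = 0 :=
    (AddCircle.coe_eq_zero_iff 1).2 ⟨2 * g, by simp⟩
  constructor
  · intro s s'
    fin_cases i <;> simp [polarHeight, hcenter]
  · intro r
    fin_cases i <;> simp [polarHeight, hperiod]
  · intro j _ s _
    fin_cases i <;> simp [polarHeight]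

/-- The points to which the strata of the surface collapse, in polar coordinates: the corner of
the polygon, the midpoints of its edges, and the centre of the disc. -/
def target : ℕ → ℝ × ℝ → ℝ × ℝ
  | 0, x => (⌈x.1⌉, round x.2)
  | 1, x => (⌈x.1⌉, (⌊x.2⌋ + ⌈x.2⌉) / 2)
  | _, x => (⌊x.1⌋, x.2)

lemma target_add_natCast (κ : ℕ) (x : ℝ × ℝ) (m : ℕ) :
    target κ (x + (0, (m : ℝ))) = target κ x + (0, (m : ℝ)) := by
  match κ with
  | 0 | κ + 2 => simp [target]
  | 1 =>
    simp [target]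
    ring

lemma target_zero_fst (κ : ℕ) (s : ℝ) : (target κ (0, s)).1 = 0 := by
  match κ with
  | 0 | 1 | κ + 2 => simp [target]

lemma target_one_mem (κ : ℕ) {s : ℝ} {m : ℕ} (hs : s ∈ Set.Icc (m : ℝ) (m + 1)) :
    target κ (1, s) ∈ ({1} ×ˢ Set.Icc (m : ℝ) (m + 1) : Set (ℝ × ℝ)) := by
  match κ with
  | 0 =>
    have hlo : (m : ℤ) ≤ round s := by
      rw [round_eq]
      exact Int.le_floor.2 (by push_cast; linarith [hs.1])
    have hhi : round s < m + 1 + 1 := by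
      rw [round_eq]
      exact Int.floor_lt.2 (by push_cast; linarith [hs.2])
    have hround : (round s : ℝ) ∈ Set.Icc (m : ℝ) (m + 1) :=
      ⟨by exact_mod_cast hlo, by exact_mod_cast Int.lt_add_one_iff.1 hhi⟩
    simp only [target, Int.ceil_one, Int.cast_one]
    exact ⟨rfl, hround⟩
  | 1 =>
    have hfloor : (m : ℝ) ≤ ⌊s⌋ := by exact_mod_cast Int.le_floor.2 hs.1
    have hceil : (⌈s⌉ : ℝ) ≤ m + 1 := by exact_mod_cast Int.ceil_le.2 (by exact_mod_cast hs.2)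
    have hle : (⌊s⌋ : ℝ) ≤ ⌈s⌉ := by exact_mod_cast Int.floor_le_ceil s
    simp only [target, Int.ceil_one, Int.cast_one]
    exact ⟨rfl, by constructor <;> linarith⟩
  | κ + 2 => exact ⟨by simp [target], hs⟩

/-- The motion of a point towards its target, in polar coordinates. -/
def slide (κ : ℕ) (t : I) (x : ℝ × ℝ) : ℝ × ℝ := AffineMap.lineMap x (target κ x) (t : ℝ)

lemma slide_add_natCast (κ : ℕ) (t : I) (x : ℝ × ℝ) (m : ℕ) :
    slide κ t (x + (0, (m : ℝ))) = slide κ t x + (0, (m : ℝ)) := by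
  simp only [slide, target_add_natCast, AffineMap.lineMap_apply_module]
  module

lemma respectsGluing_polar_slide (hg : 1 ≤ g) (κ : ℕ) (t : I) :
    RespectsGluing g fun x ↦ polar g (slide κ t x) := by
  have hslide {C : Set (ℝ × ℝ)} (hC : Convex ℝ C) {x : ℝ × ℝ} (hx : x ∈ C)
      (htarget : target κ x ∈ C) : slide κ t x ∈ C := hC.lineMap_mem hx htarget t.2
  constructor
  · intro s s'
    have hcenter (s : ℝ) : slide κ t (0, s) ∈ ({0} ×ˢ Set.univ : Set (ℝ × ℝ)) :=
      hslide ((convex_singleton 0).prod convex_univ) (by simp) (by simp [target_zero_fst])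
    have h := hcenter s
    have h' := hcenter s'
    generalize slide κ t (0, s) = x at h
    generalize slide κ t (0, s') = x' at h'
    obtain ⟨r, u⟩ := x
    obtain ⟨r', u'⟩ := x'
    obtain rfl : r = 0 := h.1
    obtain rfl : r' = 0 := h'.1
    exact polar_zero _ _
  · intro r
    have h := slide_add_natCast κ t (r, 0) (2 * g)
    simp only [Prod.mk_add_mk, add_zero, zero_add, Nat.cast_mul, Nat.cast_two] at h
    rw [h]
    obtain ⟨r', s'⟩ := slide κ t (r, 0)
    simpa using (polar_add_period hg r' s').symm
  · intro j hj s hs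
    have hedge : slide κ t (1, s) ∈ ({1} ×ˢ Set.Icc (2 * j : ℝ) (2 * j + 1) : Set (ℝ × ℝ)) := by
      have htarget := target_one_mem κ (m := 2 * j) (by exact_mod_cast hs)
      rw [Nat.cast_mul, Nat.cast_two] at htarget
      exact hslide ((convex_singleton 1).prod (convex_Icc _ _)) ⟨rfl, hs⟩ htarget
    have h := slide_add_natCast κ t (1, s) 1
    simp only [Prod.mk_add_mk, add_zero, Nat.cast_one] at h
    rw [h]
    generalize slide κ t (1, s) = x at hedge
    obtain ⟨r, u⟩ := x
    obtain rfl : r = 1 := hedge.1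
    simpa using polar_add_one hj hedge.2

lemma exists_height (hg : 1 ≤ g) :
    ∃ h : Fin 2 → C(Ng g, ℝ), ∀ i, ∀ x ∈ rect g, h i (polar g x) = polarHeight i x := by
  choose h hh using fun i ↦
    (respectsGluing_polarHeight i).exists_continuousMap hg (continuous_polarHeight i)
  exact ⟨h, hh⟩

lemma stratum_cases {h : Fin 2 → C(Ng g, ℝ)} {y : Ng g} (hle : h 0 y ≤ h 1 y) {κ : ℕ}
    (hy : y ∈ stratum h κ) :
    κ = 0 ∧ h 1 y < 1 ∨ κ = 1 ∧ h 0 y < 1 ∧ h 0 y < h 1 y ∨ κ = 2 ∧ 0 < h 0 y := by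
  obtain ⟨τ, ⟨hτ, hne⟩, rfl⟩ := hy
  have hlevel : level h τ y = (if τ < h 0 y then 1 else 0) + if τ < h 1 y then 1 else 0 := by
    rw [level, Set.ncard_eq_toFinset_card', Set.toFinset_ofPred, Finset.card_filter,
      Fin.sum_univ_two]
  rw [hlevel]
  rcases (hne 0).lt_or_gt with h₀ | h₀
  · rcases (hne 1).lt_or_gt with h₁ | h₁
    · exact .inl ⟨by simp [h₀.not_gt, h₁.not_gt], h₁.trans hτ.2⟩
    · exact .inr (.inl ⟨by simp [h₀.not_gt, h₁], h₀.trans hτ.2, h₀.trans h₁⟩)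
  · exact .inr (.inr ⟨by simp [h₀, h₀.trans_le hle], hτ.1.trans h₀⟩)

lemma eventually_ceil_fst {x : ℝ × ℝ} (hr : 0 < x.1) :
    ∀ᶠ x' in 𝓝[rect g] x, ⌈x'.1⌉ = 1 := by
  filter_upwards [self_mem_nhdsWithin,
    nhdsWithin_le_nhds (continuous_fst.continuousAt.eventually_const_lt hr)] with x' hx' hpos
  exact Int.ceil_eq_iff.2 ⟨by simpa using hpos, by simpa using hx'.1.2⟩

lemma eventually_floor_fst {x : ℝ × ℝ} (hr : x.1 < 1) :
    ∀ᶠ x' in 𝓝[rect g] x, ⌊x'.1⌋ = 0 := by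
  filter_upwards [self_mem_nhdsWithin,
    nhdsWithin_le_nhds (continuous_fst.continuousAt.eventually_lt_const hr)] with x' hx' hlt
  exact Int.floor_eq_zero_iff.2 ⟨hx'.1.1, hlt⟩

lemma eventually_round_eq {s : ℝ} (hs : ‖(s : UnitAddCircle)‖ < 1 / 2) :
    ∀ᶠ s' in 𝓝 s, round s' = round s := by
  rw [UnitAddCircle.norm_eq, abs_lt] at hs
  have hlt : s ∈ Set.Ioo (round s - 1 / 2 : ℝ) (round s + 1 / 2) := by constructor <;> linarith
  filter_upwards [Ioo_mem_nhds hlt.1 hlt.2] with s' hs'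
  exact round_eq_iff.2 ⟨hs'.1.le, hs'.2⟩

lemma eventually_floor_ceil_eq {s : ℝ} (hs : 0 < ‖(s : UnitAddCircle)‖) :
    ∀ᶠ s' in 𝓝 s, ⌊s'⌋ = ⌊s⌋ ∧ ⌈s'⌉ = ⌊s⌋ + 1 := by
  have hne : (⌊s⌋ : ℝ) ≠ s := fun h ↦ by
    rw [UnitAddCircle.norm_eq, ← h] at hs
    simp at hs
  filter_upwards [Ioo_mem_nhds (lt_of_le_of_ne (Int.floor_le s) hne) (Int.lt_floor_add_one s)]
    with s' hs'
  exact ⟨Int.floor_eq_iff.2 ⟨hs'.1.le, hs'.2⟩,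
    Int.ceil_eq_iff.2 ⟨by simpa using hs'.1, by simpa using hs'.2.le⟩⟩

/-- Near a point of a stratum, the target depends continuously on the point and moves only along
the circle of polar coordinates of the centre. -/
lemma exists_eventuallyEq_target {h : Fin 2 → C(Ng g, ℝ)}
    (hh : ∀ i, ∀ x ∈ rect g, h i (polar g x) = polarHeight i x) {κ : ℕ} {x : ℝ × ℝ}
    (hx : x ∈ rect g) (hstratum : polar g x ∈ stratum h κ) :
    ∃ f : ℝ × ℝ → ℝ × ℝ, Continuous f ∧ (∀ x', polar g (f x') = polar g (f x)) ∧
      target κ =ᶠ[𝓝[rect g] x] f := by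
  have hsnd {P : ℝ → Prop} (hP : ∀ᶠ s in 𝓝 x.2, P s) : ∀ᶠ x' in 𝓝[rect g] x, P x'.2 :=
    nhdsWithin_le_nhds (continuous_snd.continuousAt.eventually hP)
  have hheight₀ : h 0 (polar g x) = 2 * (1 - x.1) := hh 0 x hx
  have hheight₁ : h 1 (polar g x) = 2 * max (1 - x.1) ‖(x.2 : UnitAddCircle)‖ := hh 1 x hx
  have hle : h 0 (polar g x) ≤ h 1 (polar g x) := by
    rw [hheight₀, hheight₁]
    gcongr
    exact le_max_left _ _
  have hcases := stratum_cases hle hstratum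
  rw [hheight₀, hheight₁] at hcases
  rcases hcases with ⟨rfl, h₁⟩ | ⟨rfl, h₀, hlt⟩ | ⟨rfl, h₀⟩
  · have hmax : max (1 - x.1) ‖(x.2 : UnitAddCircle)‖ < 1 / 2 := by linarith
    have hs : ‖(x.2 : UnitAddCircle)‖ < 1 / 2 := (le_max_right _ _).trans_lt hmax
    have hr : 0 < x.1 := by linarith [le_max_left (1 - x.1) ‖(x.2 : UnitAddCircle)‖]
    refine ⟨fun _ ↦ (1, round x.2), continuous_const, fun _ ↦ rfl, ?_⟩
    filter_upwards [eventually_ceil_fst hr, hsnd (eventually_round_eq hs)]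
      with x' hceil hround
    simp [target, hceil, hround]
  · have hs : 0 < ‖(x.2 : UnitAddCircle)‖ := by
      refine (sub_nonneg.2 hx.1.2).trans_lt ?_
      by_contra! hmax
      rw [max_eq_left hmax] at hlt
      exact lt_irrefl _ hlt
    refine ⟨fun _ ↦ (1, (⌊x.2⌋ + (⌊x.2⌋ + 1)) / 2), continuous_const, fun _ ↦ rfl, ?_⟩
    filter_upwards [eventually_ceil_fst (by linarith), hsnd (eventually_floor_ceil_eq hs)]
      with x' hceil hs'
    simp [target, hceil, hs']
  · refine ⟨fun x' ↦ (0, x'.2), by fun_prop, fun _ ↦ polar_zero _ _, ?_⟩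
    filter_upwards [eventually_floor_fst (x := x) (by linarith)] with x' hfloor
    simp [target, hfloor]

lemma exists_isCollapse_stratum (hg : 1 ≤ g) {h : Fin 2 → C(Ng g, ℝ)}
    (hh : ∀ i, ∀ x ∈ rect g, h i (polar g x) = polarHeight i x) (κ : ℕ) :
    ∃ c, IsCollapse c (stratum h κ) := by
  refine IsCollapse.exists_of_isQuotientMap (isQuotientMap_polar hg) (isOpen_stratum κ)
    (fun p : I × rect g ↦ polar g (slide κ p.1 p.2)) ?_ ?_ ?_ ?_
  · rintro ⟨t, x⟩ ⟨-, hx⟩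
    obtain ⟨f, hf, -, heq⟩ := exists_eventuallyEq_target hh x.2 hx
    have htarget : ContinuousAt (fun x : rect g ↦ target κ x) x :=
      (hf.comp continuous_subtype_val).continuousAt.congr
        ((eventually_nhds_subtype_iff _ _ _).2 (heq.mono fun _ ↦ Eq.symm))
    have hslide : ContinuousAt (fun p : I × rect g ↦ slide κ p.1 p.2) (t, x) := by
      simp only [slide, AffineMap.lineMap_apply_module]
      have := htarget.comp (f := fun p : I × rect g ↦ p.2) (x := (t, x)) continuousAt_snd
      simp only [Function.comp_def] at this
      fun_prop
    exact (continuous_polar.continuousAt.comp hslide).continuousWithinAt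
  · intro x _
    simp [slide]
  · intro x hx
    obtain ⟨f, -, hconst, heq⟩ := exists_eventuallyEq_target hh x.2 hx
    have hone (x' : ℝ × ℝ) : slide κ 1 x' = target κ x' := by simp [slide]
    filter_upwards [(eventually_nhds_subtype_iff _ _ (fun x' ↦ target κ x' = f x')).2 heq]
      with x' hx'
    simp only [hone, hx', heq.self_of_nhdsWithin x.2, hconst]
  · intro t x _ x' hxx'
    exact (respectsGluing_polar_slide hg κ t).eq_of_polar_eq hg x.2 x'.2 hxx'

theorem catLE_prod_SP {J : Type*} [Fintype J] (n : J → ℕ) {g : J → ℕ} (hg : ∀ j, 1 ≤ g j) :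
    catLE (∀ j, SP (n j) (Ng (g j))) (2 * ∑ j, n j) := by
  have := fun j ↦ pathConnectedSpace (hg j)
  choose h hh using fun j ↦ exists_height (hg j)
  choose c hc using fun j ↦ exists_isCollapse_stratum (hg j) (hh j)
  have hcat := SP.catLE_prod_of_isCollapse (n := n) c hc
  rwa [← Finset.sum_mul, Nat.card_fin, mul_comm] at hcat

end Ng

/-! ### Lifting sign data over null-homotopic open sets -/

section Lifting

open Topology

variable {E B X Y Z : Type*} [TopologicalSpace E] [TopologicalSpace B] [TopologicalSpace X]
  [TopologicalSpace Y] [TopologicalSpace Z] {π : E → B}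

lemma exists_lift_of_nullhomotopic (hπ : IsCoveringMap π) (hsurj : Function.Surjective π)
    {f : C(Y, B)} (hf : f.Nullhomotopic) : ∃ s : C(Y, E), ∀ y, π (s y) = f y := by
  obtain ⟨b, ⟨H⟩⟩ := hf
  obtain ⟨e, rfl⟩ := hsurj b
  have hzero (y : Y) : H.symm.toContinuousMap (0, y) = π (ContinuousMap.const Y e y) :=
    H.symm.apply_zero y
  let L := hπ.liftHomotopy H.symm.toContinuousMap (ContinuousMap.const Y e) hzero
  refine ⟨L.comp ⟨fun y ↦ (1, y), by fun_prop⟩, fun y ↦ ?_⟩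
  exact (congrFun (hπ.liftHomotopy_lifts _ _ hzero) (1, y)).trans (H.symm.apply_one y)

/-- `γ z • P z` is a possibly discontinuous section over `X`, and over `U` there is a continuous
one. The two differ by `c`. -/
theorem exists_gauge_correction {G : Type*} [Group G] [MulAction G E]
    (hπ : IsQuotientCoveringMap π G) {U : Set X} (hU : (inclMap U).Nullhomotopic) (Φ : C(X, B))
    {p : Z → X} (hp : Continuous p) {P : Z → E} (hP : Continuous P)
    (hΦ : ∀ z, Φ (p z) = π (P z)) {γ : Z → G}
    (hγ : ∀ z z', p z = p z' → γ z • P z = γ z' • P z') :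
    ∃ c : X → G, ∀ C : Set Z, IsPreconnected C → Set.MapsTo p C U →
      ∀ z ∈ C, ∀ z' ∈ C, c (p z) * γ z = c (p z') * γ z' := by
  have := hπ.isCancelSMul
  have := hπ.toContinuousConstSMul
  obtain ⟨s, hs⟩ := exists_lift_of_nullhomotopic hπ.isCoveringMap hπ.surjective
    (f := Φ.comp (inclMap U)) (hU.comp_right Φ)
  have hc (x : X) : ∃ c : G, ∀ hx : x ∈ U, ∀ z, p z = x → s ⟨x, hx⟩ = (c * γ z) • P z := by
    by_cases h : x ∈ U ∧ ∃ z, p z = x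
    · obtain ⟨hx, z, rfl⟩ := h
      obtain ⟨v, hv⟩ := hπ.apply_eq_iff_mem_orbit.1 ((hs ⟨p z, hx⟩).trans (hΦ z))
      refine ⟨v * (γ z)⁻¹, fun _ z' hz' ↦ ?_⟩
      rw [mul_smul, hγ z' z hz', ← mul_smul, inv_mul_cancel_right]
      exact hv.symm
    · exact ⟨1, fun hx z hz ↦ (h ⟨hx, z, hz⟩).elim⟩
  choose c hc using hc
  refine ⟨c, fun C hC hCU z hz z' hz' ↦ ?_⟩
  have := isPreconnected_iff_preconnectedSpace.1 hC
  have heq : (fun w : C ↦ s ⟨p w, hCU w.2⟩) = fun w : C ↦ (c (p z) * γ z) • P w := by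
    refine hπ.isCoveringMap.eq_of_comp_eq (by fun_prop) (by fun_prop) ?_ ⟨z, hz⟩ (hc _ _ _ rfl)
    funext w
    exact (hs _).trans ((hΦ w).trans (hπ.map_smul _).symm)
  have hz'' := congrFun heq ⟨z', hz'⟩
  rw [hc _ (hCU hz') z' rfl] at hz''
  exact (IsCancelSMul.right_cancel _ _ _ hz'').symm

end Lifting

/-! ### The double cover of the nonzero functions up to sign -/

/-- The nonzero real functions on `ι`. -/
abbrev NonzeroFun (ι : Type*) : Type _ := {f : ι → ℝ // f ≠ 0}

namespace NonzeroFun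

open Topology

variable {ι : Type*}

instance : MulAction ℤˣ (NonzeroFun ι) where
  smul u f := ⟨u • f.1, (smul_ne_zero_iff_ne u).2 f.2⟩
  one_smul f := Subtype.ext (one_smul _ f.1)
  mul_smul u v f := Subtype.ext (mul_smul u v f.1)

instance : ContinuousConstSMul ℤˣ (NonzeroFun ι) where
  continuous_const_smul u := by
    refine Continuous.subtype_mk (continuous_pi fun T ↦ ?_) _
    exact ((continuous_apply T).comp continuous_subtype_val).const_smul u

/-- The function `f ⊗ f`, which determines `f` up to sign. -/
def tensorSq (f : NonzeroFun ι) (q : ι × ι) : ℝ := f.1 q.1 * f.1 q.2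

/-- The space of nonzero functions up to sign, embedded by `f ↦ f ⊗ f`. -/
abbrev UpToSign (ι : Type*) : Type _ := Set.range (tensorSq (ι := ι))

/-- The class of a nonzero function up to sign. -/
def upToSign (f : NonzeroFun ι) : UpToSign ι := ⟨tensorSq f, f, rfl⟩

lemma continuous_upToSign : Continuous (upToSign (ι := ι)) := by
  refine Continuous.subtype_mk (continuous_pi fun q ↦ ?_) _
  exact ((continuous_apply q.1).comp continuous_subtype_val).mul
    ((continuous_apply q.2).comp continuous_subtype_val)

lemma upToSign_eq_iff {f f' : NonzeroFun ι} :
    upToSign f = upToSign f' ↔ f ∈ MulAction.orbit ℤˣ f' := by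
  constructor
  · intro h
    have hmul (T T' : ι) : f.1 T * f.1 T' = f'.1 T * f'.1 T' :=
      congrFun (congrArg Subtype.val h) (T, T')
    obtain ⟨T, hT⟩ := Function.ne_iff.1 f.2
    rcases mul_self_eq_mul_self_iff.1 (hmul T T) with hsame | hopp
    · refine ⟨1, Subtype.ext (funext fun T' ↦ mul_left_cancel₀ hT ?_)⟩
      simpa [hsame] using (hmul T T').symm
    · refine ⟨-1, Subtype.ext (funext fun T' ↦ mul_left_cancel₀ hT ?_)⟩
      change f.1 T * (-1 : ℤˣ) • f'.1 T' = f.1 T * f.1 T'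
      rw [hmul, hopp]
      simp
  · rintro ⟨u, rfl⟩
    refine Subtype.ext (funext fun q ↦ ?_)
    change (u • f'.1 q.1) * (u • f'.1 q.2) = f'.1 q.1 * f'.1 q.2
    rcases Int.units_eq_one_or u with rfl | rfl <;> simp

lemma exists_section (f : NonzeroFun ι) {T : ι} (hT : f.1 T ≠ 0) :
    ∃ sec : UpToSign ι → NonzeroFun ι, Function.RightInverse sec upToSign ∧
      sec (upToSign f) = f ∧ ∀ b, (sec b).1 T = f.1 T / |f.1 T| * √(b.1 (T, T)) := by
  have hrep (b : UpToSign ι) : ∃ f', upToSign f' = b ∧ 0 ≤ f.1 T * f'.1 T := by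
    obtain ⟨_, f', rfl⟩ := b
    rcases le_total 0 (f.1 T * f'.1 T) with h | h
    · exact ⟨f', rfl, h⟩
    · refine ⟨-1 • f', upToSign_eq_iff.2 ⟨-1, rfl⟩, ?_⟩
      change 0 ≤ f.1 T * (-1 : ℤˣ) • f'.1 T
      simpa using h
  choose sec hsec hsign using hrep
  refine ⟨sec, hsec, ?_, fun b ↦ ?_⟩
  · obtain ⟨u, hu⟩ := upToSign_eq_iff.1 (hsec (upToSign f))
    have h := hsign (upToSign f)
    rw [← hu] at h ⊢
    rcases Int.units_eq_one_or u with rfl | rfl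
    · exact one_smul _ f
    · change 0 ≤ f.1 T * (-1 : ℤˣ) • f.1 T at h
      simp only [Units.neg_smul, one_smul] at h
      nlinarith [mul_self_pos.2 hT]
  · have hsq : b.1 (T, T) = (sec b).1 T * (sec b).1 T :=
      congrFun (congrArg Subtype.val (hsec b).symm) (T, T)
    have h := hsign b
    rw [hsq, Real.sqrt_mul_self_eq_abs, eq_comm, div_mul_eq_mul_div,
      div_eq_iff (abs_ne_zero.2 hT)]
    rcases abs_cases (f.1 T) with ⟨hf, hf₀⟩ | ⟨hf, hf₀⟩ <;> rw [hf]
    · rw [abs_of_nonneg (nonneg_of_mul_nonneg_right h (hf₀.lt_of_ne' hT)), mul_comm]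
    · rw [abs_of_nonpos (nonpos_of_mul_nonneg_right h hf₀)]
      ring

lemma isOpenMap_upToSign : IsOpenMap (upToSign (ι := ι)) := by
  refine IsOpenMap.of_sections fun f ↦ ?_
  obtain ⟨T, hT⟩ : ∃ T, f.1 T ≠ 0 := Function.ne_iff.1 f.2
  obtain ⟨sec, hsec, hself, hval⟩ := exists_section f hT
  have hcoord (T' : ι) : Continuous fun b : UpToSign ι ↦ b.1 (T, T') :=
    (continuous_apply (T, T')).comp continuous_subtype_val
  have hcont : ContinuousAt (fun b ↦ (sec b).1 T) (upToSign f) := by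
    simp only [hval]
    exact ((hcoord T).sqrt.const_mul _).continuousAt
  have hne : (sec (upToSign f)).1 T ≠ 0 := by rwa [hself]
  refine ⟨sec, IsInducing.subtypeVal.continuousAt_iff.2 (continuousAt_pi.2 fun T' ↦ ?_),
    hself, hsec⟩
  refine ((hcoord T').continuousAt.div hcont hne).congr ?_
  filter_upwards [hcont.eventually_ne hne] with b hb
  have hmul : b.1 (T, T') = (sec b).1 T * (sec b).1 T' :=
    congrFun (congrArg Subtype.val (hsec b).symm) (T, T')
  exact (congrArg (· / _) hmul).trans (mul_div_cancel_left₀ _ hb)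

lemma isQuotientCoveringMap_upToSign : IsQuotientCoveringMap (upToSign (ι := ι)) ℤˣ where
  toIsQuotientMap := isOpenMap_upToSign.isQuotientMap continuous_upToSign
    fun ⟨_, f, h⟩ ↦ ⟨f, Subtype.ext h⟩
  toContinuousConstSMul := inferInstance
  apply_eq_iff_mem_orbit := upToSign_eq_iff
  disjoint f := by
    obtain ⟨T, hT⟩ : ∃ T, f.1 T ≠ 0 := Function.ne_iff.1 f.2
    have hcont : Continuous fun f' : NonzeroFun ι ↦ f'.1 T * f.1 T :=
      ((continuous_apply T).comp continuous_subtype_val).mul_const _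
    refine ⟨{f' | 0 < f'.1 T * f.1 T},
      hcont.continuousAt.eventually_const_lt (mul_self_pos.2 hT), ?_⟩
    rintro u ⟨_, ⟨f', hf', rfl⟩, hu⟩
    refine (Int.units_eq_one_or u).resolve_right ?_
    rintro rfl
    change 0 < (-1 : ℤˣ) • f'.1 T * f.1 T at hu
    have hpos : 0 < f'.1 T * f.1 T := hf'
    simp only [Units.neg_smul, one_smul, neg_mul] at hu
    linarith

end NonzeroFun

/-! ### The sign character of the surface -/

namespace NonzeroFun

open Polynomial

/-- The function of a nonzero real polynomial. -/
def ofPolynomial (p : ℝ[X]) (hp : p ≠ 0) : NonzeroFun ℝ :=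
  ⟨fun T ↦ p.eval T, fun h ↦ hp (Polynomial.funext fun T ↦ by simpa using congrFun h T)⟩

lemma smul_ofPolynomial {p : ℝ[X]} (hp : p ≠ 0) (u : ℤˣ) (hup : u • p ≠ 0) :
    ofPolynomial (u • p) hup = u • ofPolynomial p hp := by
  refine Subtype.ext (funext fun T ↦ ?_)
  change (u • p).eval T = u • p.eval T
  rcases Int.units_eq_one_or u with rfl | rfl <;> simp

end NonzeroFun

lemma uzpow_sum {ι : Type*} (s : Finset ι) (u : ℤˣ) (f : ι → ZMod 2) :
    u ^ ∑ i ∈ s, f i = ∏ i ∈ s, u ^ f i :=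
  congrArg Additive.toMul (Finset.sum_smul (x := Additive.ofMul u))

namespace Ng

open Polynomial Topology

variable {g : ℕ}

/-- Indicator of the second edge of the polygon, where the sign of `signPoly` has to be changed
to make it respect the gluing of the first two edges. -/
def gauge (x : ℝ × ℝ) : ZMod 2 := if x.1 = 1 ∧ 1 ≤ x.2 ∧ x.2 < 2 then 1 else 0

/-- Homogeneous coordinates of the map from the surface to the projective plane which collapses
all edges but the first two, written as the coefficients of a polynomial: the product of `n`
such polynomials is the value of the identification of the `n`-th symmetric product of the
projective plane with a `2n`-dimensional projective space. -/
def signPoly (x : ℝ × ℝ) : ℝ[X] :=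
  C (1 - x.1) + C (x.1 * Real.cos (Real.pi * min x.2 2)) * X
    + C (x.1 * Real.sin (Real.pi * min x.2 2)) * X ^ 2

lemma signPoly_ne_zero (x : ℝ × ℝ) : signPoly x ≠ 0 := by
  intro h
  have h₀ : 1 - x.1 = 0 := by simpa [signPoly] using congrArg (coeff · 0) h
  obtain ⟨hcos, hsin⟩ : Real.cos (Real.pi * min x.2 2) = 0 ∧
      Real.sin (Real.pi * min x.2 2) = 0 := by
    have h₁ := congrArg (coeff · 1) h
    have h₂ := congrArg (coeff · 2) h
    simpa [signPoly, ← sub_eq_zero.1 h₀, coeff_X, coeff_X_pow, coeff_C] using And.intro h₁ h₂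
  simpa [hcos, hsin] using Real.sin_sq_add_cos_sq (Real.pi * min x.2 2)

lemma continuous_eval_signPoly (T : ℝ) : Continuous fun x ↦ (signPoly x).eval T := by
  simp only [signPoly, eval_add, eval_mul, eval_C, eval_X, eval_pow]
  fun_prop

lemma respectsGluing_signPoly (hg : 1 ≤ g) :
    RespectsGluing g fun x ↦ (-1 : ℤˣ) ^ gauge x • signPoly x where
  zero s s' := by simp [gauge, signPoly]
  wrap r := by
    have hg₂ : (2 : ℝ) ≤ 2 * g := by exact_mod_cast Nat.mul_le_mul_left 2 hg
    have hg₃ : ¬ (2 * g : ℝ) < 2 := hg₂.not_gt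
    simp only [gauge, signPoly, min_eq_right hg₂, min_eq_left (zero_le_two (α := ℝ)), hg₃,
      (zero_lt_one (α := ℝ)).not_ge, mul_comm Real.pi 2, Real.cos_two_pi, Real.sin_two_pi]
    simp
  glue j _ s hs := by
    rcases Nat.eq_zero_or_pos j with rfl | hj
    · obtain ⟨hs₀, hs₁⟩ : 0 ≤ s ∧ s ≤ 1 := by simpa using hs
      have hpoly : signPoly (1, s + 1) = -signPoly (1, s) := by
        simp only [signPoly, min_eq_left (show s + 1 ≤ 2 by linarith),
          min_eq_left (show s ≤ 2 by linarith), mul_add, mul_one, Real.cos_add_pi,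
          Real.sin_add_pi, sub_self, map_zero, one_mul, C_neg]
        ring
      rcases hs₁.eq_or_lt with rfl | hs₁
      · rw [hpoly]
        simp [gauge, one_add_one_eq_two]
      · have hs₂ : s + 1 < 2 := by linarith
        simp [gauge, hpoly, hs₀, hs₁.not_ge, hs₂]
    · have hs₂ : 2 ≤ s := le_trans (by norm_cast; omega) hs.1
      have hs₃ : 2 ≤ s + 1 := by linarith
      simp [gauge, signPoly, hs₂, hs₃, hs₂.not_gt, hs₃.not_gt]

lemma exists_lift_signPoly (hg : 1 ≤ g) :
    ∃ F : Ng g → ℝ[X], (∀ x ∈ rect g, F (polar g x) = (-1 : ℤˣ) ^ gauge x • signPoly x) ∧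
      (∀ y, F y ≠ 0) ∧ ∀ T T', Continuous fun y ↦ (F y).eval T * (F y).eval T' := by
  obtain ⟨F, hF⟩ := (respectsGluing_signPoly hg).exists_lift hg
  refine ⟨F, hF, fun y ↦ ?_, fun T T' ↦ ?_⟩
  · obtain ⟨x, hx, rfl⟩ := surjOn_polar hg (Set.mem_univ y)
    rw [hF x hx]
    exact (smul_ne_zero_iff_ne _).2 (signPoly_ne_zero x)
  · refine (isQuotientMap_polar hg).continuous_iff.2 ?_
    have hcont : Continuous fun x : rect g ↦ (signPoly x).eval T * (signPoly x).eval T' :=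
      ((continuous_eval_signPoly T).mul (continuous_eval_signPoly T')).comp continuous_subtype_val
    refine hcont.congr fun x ↦ ?_
    rw [Function.comp_apply, hF x x.2]
    rcases Int.units_eq_one_or ((-1 : ℤˣ) ^ gauge x) with hu | hu <;> simp [hu]

lemma exists_lift_prod_signPoly (n : ℕ) (hg : 1 ≤ g) :
    ∃ Q : SP n (Ng g) → ℝ[X],
      (∀ z : Fin n → ℝ × ℝ, (∀ i, z i ∈ rect g) → Q (SP.mk fun i ↦ polar g (z i))
        = (-1 : ℤˣ) ^ (∑ i, gauge (z i)) • ∏ i, signPoly (z i)) ∧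
      (∀ y, Q y ≠ 0) ∧ ∀ T T', Continuous fun y ↦ (Q y).eval T * (Q y).eval T' := by
  obtain ⟨F, hF, hne, hcont⟩ := exists_lift_signPoly hg
  let Q : SP n (Ng g) → ℝ[X] := Quot.lift (fun y ↦ ∏ i, F (y i)) fun y _ ⟨e, he⟩ ↦ by
    rw [← he]
    exact (Equiv.prod_comp e fun i ↦ F (y i)).symm
  refine ⟨Q, fun z hz ↦ ?_, fun y ↦ ?_, fun T T' ↦ ?_⟩
  · change ∏ i, F (polar g (z i)) = _
    simp only [hF _ (hz _), Finset.prod_smul]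
    rw [uzpow_sum]
  · obtain ⟨y, rfl⟩ := SP.isOpenQuotientMap_mk.surjective y
    exact Finset.prod_ne_zero_iff.2 fun i _ ↦ hne (y i)
  · refine SP.isOpenQuotientMap_mk.isQuotientMap.continuous_iff.2 ?_
    have hprod : Continuous fun y : Fin n → Ng g ↦
        ∏ i, (F (y i)).eval T * (F (y i)).eval T' :=
      continuous_finsetProd _ fun i _ ↦ (hcont T T').comp (continuous_apply i)
    refine hprod.congr fun y ↦ ?_
    rw [Finset.prod_mul_distrib, ← eval_prod, ← eval_prod]
    rfl

variable {J : Type*} (n : J → ℕ) {g : J → ℕ}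

/-- The point of the product of symmetric products with given polar coordinates. -/
def prodPolar (g : J → ℕ) (z : (j : J) × Fin (n j) → ℝ × ℝ) : ∀ j, SP (n j) (Ng (g j)) :=
  SP.prodMk (Y := fun j ↦ Ng (g j)) fun a ↦ polar (g a.1) (z a)

lemma continuous_prodPolar : Continuous (prodPolar n g) :=
  SP.isOpenQuotientMap_prodMk.continuous.comp
    (continuous_pi fun a ↦ continuous_polar.comp (continuous_apply a))

/-- Over a null-homotopic set, the sign character of the `j`-th symmetric product is trivial. -/
theorem exists_gauge_sum_correction (hg : ∀ j, 1 ≤ g j) (j : J)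
    {U : Set (∀ j, SP (n j) (Ng (g j)))} (hU : (inclMap U).Nullhomotopic) :
    ∃ c : (∀ j, SP (n j) (Ng (g j))) → ZMod 2, ∀ C : Set ((j : J) × Fin (n j) → ℝ × ℝ),
      IsPreconnected C → (∀ z ∈ C, ∀ a, z a ∈ rect (g a.1)) → Set.MapsTo (prodPolar n g) C U →
      ∀ z ∈ C, ∀ z' ∈ C, c (prodPolar n g z) + ∑ i, gauge (z ⟨j, i⟩)
        = c (prodPolar n g z') + ∑ i, gauge (z' ⟨j, i⟩) := by
  obtain ⟨Q, hQ, hne, hcont⟩ := exists_lift_prod_signPoly (n j) (hg j)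
  let Z : Set ((j : J) × Fin (n j) → ℝ × ℝ) := {z | ∀ a, z a ∈ rect (g a.1)}
  let Φ : C(∀ j, SP (n j) (Ng (g j)), NonzeroFun.UpToSign ℝ) :=
    ⟨fun y ↦ NonzeroFun.upToSign (.ofPolynomial (Q (y j)) (hne _)),
      Continuous.subtype_mk
        (continuous_pi fun q : ℝ × ℝ ↦ (hcont q.1 q.2).comp (continuous_apply j)) _⟩
  have hprod (z : Z) : ∏ i, signPoly (z.1 ⟨j, i⟩) ≠ 0 :=
    Finset.prod_ne_zero_iff.2 fun i _ ↦ signPoly_ne_zero _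
  let P (z : Z) : NonzeroFun ℝ := .ofPolynomial _ (hprod z)
  have hP : Continuous P := by
    refine Continuous.subtype_mk (continuous_pi fun T ↦ ?_) _
    simp only [eval_prod]
    exact continuous_finsetProd _ fun i _ ↦ (continuous_eval_signPoly T).comp
      ((continuous_apply _).comp continuous_subtype_val)
  have hQP (z : Z) : NonzeroFun.ofPolynomial (Q (prodPolar n g z j)) (hne _)
      = (-1 : ℤˣ) ^ (∑ i, gauge (z.1 ⟨j, i⟩)) • P z := by
    rw [← NonzeroFun.smul_ofPolynomial (hprod z) _ ((smul_ne_zero_iff_ne _).2 (hprod z))]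
    congr 1
    exact hQ _ fun i ↦ z.2 ⟨j, i⟩
  obtain ⟨c, hc⟩ := exists_gauge_correction NonzeroFun.isQuotientCoveringMap_upToSign hU Φ
    ((continuous_prodPolar n).comp continuous_subtype_val) hP
    (fun z ↦ NonzeroFun.upToSign_eq_iff.2 ⟨_, (hQP z).symm⟩)
    (fun z z' h ↦ by rw [← hQP, ← hQP]; simp only [show prodPolar n g z = prodPolar n g z' from h])
  have hsurj : Function.Surjective fun x : ZMod 2 ↦ (-1 : ℤˣ) ^ x := by decide
  have hinj : Function.Injective fun x : ZMod 2 ↦ (-1 : ℤˣ) ^ x := by decide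
  choose log hlog using hsurj
  refine ⟨fun x ↦ log (c x), fun C hC hrect hCU z hz z' hz' ↦ hinj ?_⟩
  have hC' : IsPreconnected (Subtype.val ⁻¹' C : Set Z) := by
    rw [← IsInducing.subtypeVal.isPreconnected_image, Subtype.image_preimage_coe]
    convert hC
    exact Set.inter_eq_right.2 hrect
  simp only [uzpow_add, hlog]
  exact hc _ hC' (fun w hw ↦ hCU hw) ⟨z, hrect z hz⟩ hz ⟨z', hrect z' hz'⟩ hz'

end Ng

/-! ### Exchanging mod 2 cochains on a cycle of simplices -/

/-- A mod 2 cycle of ordered simplices with vertices `0, …, M`: for each `l ≤ M`, a fixed-point-free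
involution `flip l` of the set `S` of simplices, thought of as exchanging the two simplices that
share the face opposite to the vertex `l`. -/
structure SimplexCycle (S : Type*) (M : ℕ) where
  flip : ℕ → S → S
  flip_flip : ∀ l ≤ M, ∀ w, flip l (flip l w) = w
  flip_ne : ∀ l ≤ M, ∀ w, flip l w ≠ w

namespace SimplexCycle

variable {S : Type*} {M m : ℕ}

/-- The difference of the values of `y` at the ends of the edge `(b, b + 1)` of the simplex `w`;
here `y b w` is the value at the vertex `b` of `w`. -/
def edgeDiff (y : ℕ → S → ZMod 2) (b : ℕ) (w : S) : ZMod 2 := y b w + y (b + 1) w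

/-- `y` is a function on the vertices of the cycle: it takes the same values on a common face of
two simplices. -/
def IsVertexFunction (K : SimplexCycle S M) (y : ℕ → S → ZMod 2) : Prop :=
  ∀ l ≤ M, ∀ w, ∀ b ≤ M, b ≠ l → y b (K.flip l w) = y b w

/-- `y` is locally a function on the vertices, up to constants: its edge differences are those of a
1-cocycle of the cycle. -/
def IsCocyclePotential (K : SimplexCycle S M) (y : ℕ → S → ZMod 2) : Prop :=
  ∀ l ≤ M, ∀ w, ∃ d, ∀ b ≤ M, b ≠ l → y b (K.flip l w) = y b w + d

variable {K : SimplexCycle S M} {y c : ℕ → S → ZMod 2} {l b b' p : ℕ}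

lemma IsCocyclePotential.add_isVertexFunction (hy : K.IsCocyclePotential y)
    (hc : K.IsVertexFunction c) : K.IsCocyclePotential fun b w ↦ y b w + c b w := by
  intro l hl w
  obtain ⟨d, hd⟩ := hy l hl w
  refine ⟨d, fun b hb hbl ↦ ?_⟩
  simp only [hd b hb hbl, hc l hl w b hb hbl]
  ring

lemma IsCocyclePotential.add_flip (hy : K.IsCocyclePotential y) (hl : l ≤ M) (hb : b ≤ M)
    (hb' : b' ≤ M) (hbl : b ≠ l) (hbl' : b' ≠ l) (w : S) :
    y b (K.flip l w) + y b' (K.flip l w) = y b w + y b' w := by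
  obtain ⟨d, hd⟩ := hy l hl w
  rw [hd b hb hbl, hd b' hb' hbl']
  linear_combination CharTwo.add_self_eq_zero d

lemma IsCocyclePotential.edgeDiff_flip (hy : K.IsCocyclePotential y) (hl : l ≤ M) (hb : b < M)
    (hbl : b ≠ l) (hbl' : b + 1 ≠ l) (w : S) :
    edgeDiff y b (K.flip l w) = edgeDiff y b w :=
  hy.add_flip hl hb.le hb hbl hbl' w

lemma sum_eq_zero [Fintype S] (K : SimplexCycle S M) (hl : l ≤ M) {F : S → ZMod 2}
    (hF : ∀ w, F (K.flip l w) = F w) : ∑ w, F w = 0 :=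
  Finset.sum_involution (fun w _ ↦ K.flip l w)
    (fun w _ ↦ by rw [hF]; exact CharTwo.add_self_eq_zero _) (fun w _ _ ↦ K.flip_ne l hl w)
    (fun w _ ↦ Finset.mem_univ _) fun w _ ↦ K.flip_flip l hl w

/-- The product of the edge differences of `y 0, …, y (m - 1)`, in this order, along the edges
`(b, b + 1)` of an `(m + 1)`-simplex other than `(l, l + 1)`. -/
def edgeProd (y : ℕ → ℕ → S → ZMod 2) (m l : ℕ) (w : S) : ZMod 2 :=
  (∏ t ∈ Finset.range l, edgeDiff (y t) t w) * ∏ t ∈ Finset.Ico l m, edgeDiff (y t) (t + 1) w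

section exchange

variable {K : SimplexCycle S (m + 1)} {y : ℕ → ℕ → S → ZMod 2}

lemma prod_range_edgeDiff_flip (hy : ∀ t, K.IsCocyclePotential (y t)) (hl : l ≤ m) (w : S) :
    ∏ t ∈ Finset.range l, edgeDiff (y t) t (K.flip (l + 1) w) =
      ∏ t ∈ Finset.range l, edgeDiff (y t) t w :=
  Finset.prod_congr rfl fun t ht ↦ by
    have := Finset.mem_range.mp ht
    exact (hy t).edgeDiff_flip (by lia) (by lia) (by lia) (by lia) w

lemma prod_Ico_edgeDiff_flip (hy : ∀ t, K.IsCocyclePotential (y t)) (l : ℕ) (w : S) :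
    ∏ t ∈ Finset.Ico l m, edgeDiff (y t) (t + 1) (K.flip l w) =
      ∏ t ∈ Finset.Ico l m, edgeDiff (y t) (t + 1) w :=
  Finset.prod_congr rfl fun t ht ↦ by
    have := Finset.mem_Ico.mp ht
    exact (hy t).edgeDiff_flip (by lia) (by lia) (by lia) (by lia) w

lemma edgeProd_add_edgeProd_succ (hl : l < m) (w : S) :
    edgeProd y m l w + edgeProd y m (l + 1) w = (∏ t ∈ Finset.range l, edgeDiff (y t) t w) *
      (y l l w + y l (l + 2) w) * ∏ t ∈ Finset.Ico (l + 1) m, edgeDiff (y t) (t + 1) w := by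
  unfold edgeProd
  rw [Finset.prod_range_succ, Finset.prod_eq_prod_Ico_succ_bot hl]
  unfold edgeDiff
  linear_combination ((∏ t ∈ Finset.range l, (y t t w + y t (t + 1) w)) *
    ∏ t ∈ Finset.Ico (l + 1) m, (y t (t + 1) w + y t (t + 1 + 1) w)) *
      CharTwo.add_self_eq_zero (y l (l + 1) w)

variable [Fintype S]

lemma sum_mul_edgeProd_succ (hy : ∀ t, K.IsCocyclePotential (y t)) (hc : K.IsVertexFunction c)
    (hl : l < m) (hb : b ≤ m + 1) (hbl : b ≠ l + 1) :
    ∑ w, c b w * edgeProd y m l w = ∑ w, c b w * edgeProd y m (l + 1) w := by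
  rw [← sub_eq_zero, CharTwo.sub_eq_add, ← Finset.sum_add_distrib]
  refine K.sum_eq_zero (l := l + 1) (by lia) fun w ↦ ?_
  rw [← mul_add, ← mul_add, edgeProd_add_edgeProd_succ hl, edgeProd_add_edgeProd_succ hl,
    hc (l + 1) (by lia) w b hb hbl, prod_range_edgeDiff_flip hy hl.le, prod_Ico_edgeDiff_flip hy,
    (hy l).add_flip (by lia) (by lia) (by lia) (by lia) (by lia)]

lemma sum_mul_edgeProd_of_le (hy : ∀ t, K.IsCocyclePotential (y t)) (hc : K.IsVertexFunction c)
    (hpl : p ≤ l) (hlm : l ≤ m) : ∑ w, c p w * edgeProd y m l w = 0 := by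
  refine Nat.decreasingInduction' (P := fun k ↦ ∑ w, c p w * edgeProd y m k w = 0)
    (fun k hk hlk ih ↦ ?_) hlm (K.sum_eq_zero (l := m + 1) le_rfl fun w ↦ ?_)
  · rw [sum_mul_edgeProd_succ hy hc hk (by lia) (by lia), ih]
  · simp only [edgeProd, Finset.Ico_self, Finset.prod_empty, mul_one]
    rw [hc (m + 1) le_rfl w p (by lia) (by lia), prod_range_edgeDiff_flip hy le_rfl]

lemma sum_mul_edgeProd_of_ge (hy : ∀ t, K.IsCocyclePotential (y t)) (hc : K.IsVertexFunction c)
    (hpm : p ≤ m) (hlp : l ≤ p) : ∑ w, c (p + 1) w * edgeProd y m l w = 0 := by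
  induction l with
  | zero =>
    refine K.sum_eq_zero (Nat.zero_le _) fun w ↦ ?_
    simp only [edgeProd, Finset.range_zero, Finset.prod_empty, one_mul]
    rw [hc 0 (Nat.zero_le _) w (p + 1) (by lia) (by lia), prod_Ico_edgeDiff_flip hy]
  | succ l ih =>
    rw [← sum_mul_edgeProd_succ hy hc (by lia) (by lia) (by lia), ih (by lia)]

lemma sum_edgeDiff_mul_edgeProd (hy : ∀ t, K.IsCocyclePotential (y t))
    (hc : K.IsVertexFunction c) (hpm : p ≤ m) : ∑ w, edgeDiff c p w * edgeProd y m p w = 0 := by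
  simp only [edgeDiff, add_mul, Finset.sum_add_distrib]
  rw [sum_mul_edgeProd_of_le hy hc le_rfl hpm, sum_mul_edgeProd_of_ge hy hc hpm le_rfl, add_zero]

variable {c : ℕ → ℕ → S → ZMod 2}

lemma sum_prod_edgeDiff_exchange_succ (hy : ∀ t, K.IsCocyclePotential (y t))
    (hc : ∀ t, K.IsVertexFunction (c t)) (hpm : p ≤ m) :
    ∑ w, (∏ t ∈ Finset.range (p + 1), edgeDiff (y t) t w) *
        ∏ t ∈ Finset.Ico (p + 1) (m + 1), edgeDiff (fun b w ↦ y t b w + c t b w) t w =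
      ∑ w, (∏ t ∈ Finset.range p, edgeDiff (y t) t w) *
        ∏ t ∈ Finset.Ico p (m + 1), edgeDiff (fun b w ↦ y t b w + c t b w) t w := by
  set y' : ℕ → ℕ → S → ZMod 2 := fun t b w ↦ y t b w + c t b w with hy'
  let z : ℕ → ℕ → S → ZMod 2 := fun t ↦ if t < p then y t else y' (t + 1)
  have hz (t : ℕ) : K.IsCocyclePotential (z t) := by
    by_cases h : t < p
    · simpa only [z, if_pos h] using hy t
    · simpa only [z, if_neg h] using (hy (t + 1)).add_isVertexFunction (hc (t + 1))
  have hprod (w : S) : edgeProd z m p w = (∏ t ∈ Finset.range p, edgeDiff (y t) t w) *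
      ∏ t ∈ Finset.Ico (p + 1) (m + 1), edgeDiff (y' t) t w := by
    rw [edgeProd, ← Finset.prod_Ico_add' (fun t ↦ edgeDiff (y' t) t w) p m 1]
    congr 1
    · refine Finset.prod_congr rfl fun t ht ↦ ?_
      simp only [z, if_pos (Finset.mem_range.mp ht)]
    · refine Finset.prod_congr rfl fun t ht ↦ ?_
      simp only [z, if_neg (Finset.mem_Ico.mp ht).1.not_gt]
  rw [← add_zero (∑ w, _), ← sum_edgeDiff_mul_edgeProd hz (hc p) hpm, ← Finset.sum_add_distrib]
  refine Finset.sum_congr rfl fun w _ ↦ ?_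
  rw [hprod, Finset.prod_range_succ, Finset.prod_eq_prod_Ico_succ_bot (Nat.lt_succ_of_le hpm)]
  simp only [edgeDiff, hy']
  ring

theorem sum_prod_edgeDiff_add (hy : ∀ t, K.IsCocyclePotential (y t))
    (hc : ∀ t, K.IsVertexFunction (c t)) :
    ∑ w, ∏ t ∈ Finset.range (m + 1), edgeDiff (fun b w ↦ y t b w + c t b w) t w =
      ∑ w, ∏ t ∈ Finset.range (m + 1), edgeDiff (y t) t w := by
  have key : ∀ p ≤ m + 1, ∑ w, (∏ t ∈ Finset.range p, edgeDiff (y t) t w) *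
      ∏ t ∈ Finset.Ico p (m + 1), edgeDiff (fun b w ↦ y t b w + c t b w) t w =
      ∑ w, ∏ t ∈ Finset.range (m + 1), edgeDiff (fun b w ↦ y t b w + c t b w) t w := by
    intro p
    induction p with
    | zero => simp only [Finset.range_zero, Finset.prod_empty, one_mul, Nat.Ico_zero_eq_range,
        zero_le, forall_const]
    | succ p ih =>
      exact fun hp ↦ (sum_prod_edgeDiff_exchange_succ hy hc (by lia)).trans (ih (by lia))
  simpa using (key (m + 1) le_rfl).symm

end exchange

end SimplexCycle

/-! ### Simplices of configurations of grid points -/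

namespace Grid

/-- The unit intervals of `[0, 2ℓ]`: `(q, false)` stands for `[2q, 2q + 1]` and `(q, true)` for
`[2q + 1, 2q + 2]`, so that a cell has one even and one odd end. -/
abbrev Cell (ℓ : ℕ) : Type := Fin ℓ × Bool

namespace Cell

variable {ℓ κ : ℕ}

/-- The even end of a cell. -/
def evenEnd (c : Cell ℓ) : ℕ := 2 * c.1 + 2 * c.2.toNat

/-- The odd end of a cell. -/
def oddEnd (c : Cell ℓ) : ℕ := 2 * c.1 + 1

/-- The other cell with the same odd end. -/
def flipOdd (c : Cell ℓ) : Cell ℓ := (c.1, !c.2)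

/-- The other cell with the same even end modulo `2ℓ`. -/
def flipEven [NeZero ℓ] (c : Cell ℓ) : Cell ℓ := if c.2 then (c.1 + 1, false) else (c.1 - 1, true)

/-- The translate of a cell by `±2κ`, exchanging `[4iκ, (4i + 2)κ]` and `[(4i + 2)κ, (4i + 4)κ]`.
The reduction modulo `ℓ` is only there to get an element of `Fin ℓ`. -/
def shift (κ : ℕ) (c : Cell ℓ) : Cell ℓ :=
  (⟨(if Even (c.1 / κ : ℕ) then c.1 + κ else c.1 - κ) % ℓ, Nat.mod_lt _ c.1.pos⟩, c.2)

/-- The even end of the cell is an end of `[0, 2ℓ]`. -/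
def AtEnd (c : Cell ℓ) : Prop := c.evenEnd = 0 ∨ c.evenEnd = 2 * ℓ

lemma evenEnd_le (c : Cell ℓ) : c.evenEnd ≤ 2 * ℓ := by
  have := c.1.isLt
  have := c.2.toNat_le
  unfold evenEnd
  lia

lemma oddEnd_lt (c : Cell ℓ) : c.oddEnd < 2 * ℓ := by
  have := c.1.isLt
  unfold oddEnd
  lia

lemma oddEnd_flipOdd (c : Cell ℓ) : c.flipOdd.oddEnd = c.oddEnd := rfl

lemma flipOdd_flipOdd (c : Cell ℓ) : c.flipOdd.flipOdd = c := by simp [flipOdd]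

lemma flipOdd_ne (c : Cell ℓ) : c.flipOdd ≠ c := by simp [flipOdd, Prod.ext_iff]

lemma flipEven_flipEven [NeZero ℓ] (c : Cell ℓ) : c.flipEven.flipEven = c := by
  obtain ⟨q, _ | _⟩ := c <;> simp [flipEven]

lemma flipEven_ne [NeZero ℓ] (c : Cell ℓ) : c.flipEven ≠ c := by
  obtain ⟨q, _ | _⟩ := c <;> simp [flipEven]

lemma evenEnd_flipEven_modEq [NeZero ℓ] (c : Cell ℓ) :
    c.flipEven.evenEnd ≡ c.evenEnd [MOD 2 * ℓ] := by
  have key (q : Fin ℓ) : evenEnd (q + 1, false) ≡ evenEnd (q, true) [MOD 2 * ℓ] := by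
    have : evenEnd (q + 1, false) = (2 * (q + 1)) % (2 * ℓ) := by
      simp [evenEnd, Fin.val_add, Nat.mul_mod_mul_left]
    exact this ▸ Nat.mod_modEq _ _
  obtain ⟨q, _ | _⟩ := c
  · simpa [flipEven] using (key (q - 1)).symm
  · exact key q

lemma evenEnd_flipEven [NeZero ℓ] {c : Cell ℓ} (hc : ¬ c.AtEnd) :
    c.flipEven.evenEnd = c.evenEnd := by
  have hlt := c.evenEnd_le.lt_of_ne fun h ↦ hc (Or.inr h)
  have hmod := c.evenEnd_flipEven_modEq
  obtain h | h := c.flipEven.evenEnd_le.lt_or_eq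
  · exact hmod.eq_of_lt_of_lt h hlt
  · refine absurd (Or.inl ?_) hc
    rwa [h, Nat.ModEq, Nat.mod_self, Nat.mod_eq_of_lt hlt, eq_comm] at hmod

lemma not_atEnd_flipEven [NeZero ℓ] {c : Cell ℓ} (hc : ¬ c.AtEnd) : ¬ c.flipEven.AtEnd := by
  rwa [AtEnd, evenEnd_flipEven hc]

lemma le_of_not_even_div {q : ℕ} (h : ¬ Even (q / κ)) : κ ≤ q := by
  by_contra! hlt
  simp [Nat.div_eq_of_lt hlt] at h

lemma exists_mul_le_of_even (hκ : 0 < κ) (hℓ : 2 * κ ∣ ℓ) {c : Cell ℓ}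
    (hc : Even (c.1 / κ : ℕ)) :
    ∃ i, 2 * i * κ ≤ c.1 ∧ c.1 < (2 * i + 1) * κ ∧ (2 * i + 2) * κ ≤ ℓ := by
  obtain ⟨g, rfl⟩ := hℓ
  obtain ⟨i, hi⟩ := hc
  have hlt : i + i < 2 * g := hi ▸ Nat.div_lt_of_lt_mul (by have := c.1.isLt; lia)
  have hdiv := Nat.div_add_mod' c.1 κ
  have hmod := Nat.mod_lt c.1 hκ
  rw [hi] at hdiv
  have := Nat.mul_le_mul_left (2 * κ) (show i + 1 ≤ g by lia)
  exact ⟨i, by lia, by lia, by lia⟩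

lemma val_shift (hκ : 0 < κ) (hℓ : 2 * κ ∣ ℓ) (c : Cell ℓ) :
    ((c.shift κ).1 : ℕ) = if Even (c.1 / κ : ℕ) then c.1 + κ else c.1 - κ := by
  refine Nat.mod_eq_of_lt ?_
  split_ifs with h
  · obtain ⟨i, -, hlt, hle⟩ := exists_mul_le_of_even hκ hℓ h
    lia
  · exact (Nat.sub_le _ _).trans_lt c.1.isLt

lemma even_shift_div (hκ : 0 < κ) (hℓ : 2 * κ ∣ ℓ) (c : Cell ℓ) :
    Even ((c.shift κ).1 / κ : ℕ) ↔ ¬ Even (c.1 / κ : ℕ) := by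
  rw [val_shift hκ hℓ]
  by_cases h : Even (c.1 / κ : ℕ)
  · simp [h, Nat.add_div_right _ hκ, Nat.even_add_one]
  · obtain ⟨q, hq⟩ := Nat.exists_eq_add_of_le' (le_of_not_even_div h)
    have := h
    rw [hq, Nat.add_div_right _ hκ, Nat.even_add_one] at this
    rw [if_neg h, hq, Nat.add_sub_cancel, Nat.add_div_right _ hκ, Nat.even_add_one, not_not]

lemma shift_shift (hκ : 0 < κ) (hℓ : 2 * κ ∣ ℓ) (c : Cell ℓ) : (c.shift κ).shift κ = c := by
  refine Prod.ext (Fin.ext ?_) rfl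
  have heven := even_shift_div hκ hℓ c
  rw [val_shift hκ hℓ, val_shift hκ hℓ]
  rw [val_shift hκ hℓ] at heven
  by_cases h : Even (c.1 / κ : ℕ)
  · rw [if_pos h] at heven ⊢
    rw [if_neg (by simpa [h] using heven), Nat.add_sub_cancel]
  · rw [if_neg h] at heven ⊢
    rw [if_pos (by simpa [h] using heven), Nat.sub_add_cancel (le_of_not_even_div h)]

lemma shift_ne (hκ : 0 < κ) (hℓ : 2 * κ ∣ ℓ) (c : Cell ℓ) : c.shift κ ≠ c := by
  intro h
  have := even_shift_div hκ hℓ c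
  rw [h] at this
  exact iff_not_self this

end Cell

/-- A simplex of the subdivision of the cube `[0, 2ℓ] ^ (A × Bool)`: it consists of a cell for each
coordinate and of an ordering of the coordinates. A configuration of points indexed by `A` has the
radial coordinates `(a, true)` and the angular coordinates `(a, false)`. -/
@[ext]
structure Simplex (A : Type*) (ℓ m : ℕ) where
  cell : A × Bool → Cell ℓ
  pos : A × Bool ≃ Fin (m + 1)

namespace Simplex

variable {A : Type*} {ℓ m : ℕ}

instance [Finite A] : Finite (Simplex A ℓ m) :=
  Finite.of_injective (fun w ↦ (w.cell, w.pos)) fun _ _ h ↦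
    Simplex.ext (congrArg Prod.fst h) (congrArg Prod.snd h)

/-- The coordinate `x` of the vertex `b`: the vertices go from the even ends of the cells to the odd
ones, changing the coordinates one by one in the given order. -/
def coord (w : Simplex A ℓ m) (b : ℕ) (x : A × Bool) : ℕ :=
  if (w.pos x : ℕ) < b then (w.cell x).oddEnd else (w.cell x).evenEnd

lemma coord_le (w : Simplex A ℓ m) (b : ℕ) (x : A × Bool) : w.coord b x ≤ 2 * ℓ := by
  unfold coord
  split_ifs
  exacts [(w.cell x).oddEnd_lt.le, (w.cell x).evenEnd_le]

/-- Relabelling of the points of a configuration. -/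
def relabel (w : Simplex A ℓ m) (e : Equiv.Perm A) : Simplex A ℓ m where
  cell x := w.cell (e x.1, x.2)
  pos := (e.prodCongr (Equiv.refl Bool)).trans w.pos

lemma coord_relabel (w : Simplex A ℓ m) (e : Equiv.Perm A) (b : ℕ) (x : A × Bool) :
    (w.relabel e).coord b x = w.coord b (e x.1, x.2) := rfl

lemma eq_of_relabel_eq {w w' : Simplex A ℓ m} {e : Equiv.Perm A} (h : w.relabel e = w')
    (hpos : w'.pos = w.pos) : w' = w := by
  have he (a : A) : e a = a := by
    have : w.pos (e a, true) = w.pos (a, true) :=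
      (congrArg (fun w ↦ w.pos (a, true)) h).trans (congrArg (· (a, true)) hpos)
    exact congrArg Prod.fst (w.pos.injective this)
  subst h
  ext x : 2
  · exact congrArg w.cell (Prod.ext (he x.1) rfl)
  · rw [hpos]

section flip

variable (κ : A → ℕ)

/-- The simplex with the same face opposite to the vertex `0`. -/
def flipFirst (w : Simplex A ℓ m) : Simplex A ℓ m where
  cell x := if w.pos x = 0 then (w.cell x).flipOdd else w.cell x
  pos := w.pos

/-- The simplex with the same face opposite to the vertex `l`, for `1 ≤ l ≤ m`. -/
def flipMid (l : ℕ) (w : Simplex A ℓ m) : Simplex A ℓ m where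
  cell := w.cell
  pos := w.pos.trans (Equiv.swap (Fin.ofNat (m + 1) (l - 1)) (Fin.ofNat (m + 1) l))

open Classical in
/-- The simplex with the same face opposite to the last vertex, up to the gluing of the boundary:
the angular coordinates are periodic, and at the ends of the radial coordinate of `a` the angular
coordinate of `a` may be shifted. -/
def flipLast [NeZero ℓ] (w : Simplex A ℓ m) : Simplex A ℓ m where
  cell
  | (a, true) =>
    if w.pos (a, true) = Fin.last m ∧ ¬ (w.cell (a, true)).AtEnd
      then (w.cell (a, true)).flipEven else w.cell (a, true)
  | (a, false) =>
    if w.pos (a, false) = Fin.last m then (w.cell (a, false)).flipEven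
      else if w.pos (a, true) = Fin.last m ∧ (w.cell (a, true)).AtEnd
        then (w.cell (a, false)).shift (κ a) else w.cell (a, false)
  pos := w.pos

/-- The simplex sharing with `w` the face opposite to the vertex `l ≤ m + 1`. -/
def flip [NeZero ℓ] (l : ℕ) (w : Simplex A ℓ m) : Simplex A ℓ m :=
  if l = 0 then w.flipFirst else if l ≤ m then w.flipMid l else w.flipLast κ

lemma relabel_flip [NeZero ℓ] {e : Equiv.Perm A} (he : ∀ a, κ (e a) = κ a) (l : ℕ)
    (w : Simplex A ℓ m) : (w.relabel e).flip κ l = (w.flip κ l).relabel e := by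
  unfold flip
  split_ifs
  · rfl
  · rfl
  · refine Simplex.ext (funext ?_) rfl
    rintro ⟨a, _ | _⟩
    · simp only [flipLast, relabel, he]; rfl
    · rfl

lemma flipMid_flipMid (l : ℕ) (w : Simplex A ℓ m) : (w.flipMid l).flipMid l = w :=
  Simplex.ext rfl (Equiv.ext fun x ↦ by simp [flipMid])

variable {κ}

lemma flipFirst_flipFirst (w : Simplex A ℓ m) : w.flipFirst.flipFirst = w := by
  refine Simplex.ext (funext fun x ↦ ?_) rfl
  by_cases hx : w.pos x = 0 <;> simp [flipFirst, hx, Cell.flipOdd_flipOdd]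

lemma flipLast_flipLast [NeZero ℓ] (hκ : ∀ a, 0 < κ a) (hℓ : ∀ a, 2 * κ a ∣ ℓ)
    (w : Simplex A ℓ m) : (w.flipLast κ).flipLast κ = w := by
  refine Simplex.ext (funext ?_) rfl
  rintro ⟨a, _ | _⟩
  · by_cases h : w.pos (a, false) = Fin.last m
    · simp [flipLast, h, Cell.flipEven_flipEven]
    · by_cases htrue : w.pos (a, true) = Fin.last m <;>
        by_cases hend : (w.cell (a, true)).AtEnd <;>
        simp [flipLast, h, htrue, hend, Cell.not_atEnd_flipEven, Cell.shift_shift (hκ a) (hℓ a)]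
  · by_cases h : w.pos (a, true) = Fin.last m ∧ ¬ (w.cell (a, true)).AtEnd <;>
      simp [flipLast, h, Cell.not_atEnd_flipEven, Cell.flipEven_flipEven]

lemma flip_flip [NeZero ℓ] (hκ : ∀ a, 0 < κ a) (hℓ : ∀ a, 2 * κ a ∣ ℓ) (l : ℕ)
    (w : Simplex A ℓ m) : (w.flip κ l).flip κ l = w := by
  unfold flip
  split_ifs
  exacts [flipFirst_flipFirst w, flipMid_flipMid l w, flipLast_flipLast hκ hℓ w]

lemma flipFirst_ne (w : Simplex A ℓ m) : w.flipFirst ≠ w := by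
  intro h
  have := congrFun (congrArg cell h) (w.pos.symm 0)
  simp [flipFirst, Cell.flipOdd_ne] at this

lemma flipLast_ne [NeZero ℓ] (hκ : ∀ a, 0 < κ a) (hℓ : ∀ a, 2 * κ a ∣ ℓ) (w : Simplex A ℓ m) :
    w.flipLast κ ≠ w := by
  intro h
  obtain ⟨⟨a, i⟩, hx⟩ := w.pos.surjective (Fin.last m)
  have hfalse := congrFun (congrArg cell h) (a, false)
  have htrue := congrFun (congrArg cell h) (a, true)
  cases i with
  | false => simp [flipLast, hx, Cell.flipEven_ne] at hfalse
  | true =>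
    have hne : w.pos (a, false) ≠ Fin.last m := hx ▸ w.pos.injective.ne (by simp)
    by_cases hend : (w.cell (a, true)).AtEnd
    · simp [flipLast, hx, hne, hend, Cell.shift_ne (hκ a) (hℓ a)] at hfalse
    · simp [flipLast, hx, hend, Cell.flipEven_ne] at htrue

-- A relabelling moves both coordinates of a point or none, so it is not a transposition.
lemma relabel_ne_flipMid {l : ℕ} (hl : l ≠ 0) (hlm : l ≤ m) (w : Simplex A ℓ m)
    (e : Equiv.Perm A) : w.relabel e ≠ w.flipMid l := by
  set p := Fin.ofNat (m + 1) (l - 1) with hp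
  set q := Fin.ofNat (m + 1) l with hq
  have hpq : p ≠ q := by
    simp only [hp, hq, ne_eq, Fin.ext_iff, Fin.val_ofNat]
    rw [Nat.mod_eq_of_lt (by lia), Nat.mod_eq_of_lt (by lia)]
    lia
  intro h
  have hpos (x : A × Bool) : w.pos (e x.1, x.2) = Equiv.swap p q (w.pos x) :=
    congrArg (fun w ↦ w.pos x) h
  obtain ⟨⟨a, i⟩, hx⟩ := w.pos.surjective p
  have hmoved : w.pos (e a, i) = q := by rw [hpos (a, i), hx, Equiv.swap_apply_left]
  have hne : w.pos (a, !i) ≠ p := hx ▸ w.pos.injective.ne (by simp)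
  by_cases hy : w.pos (a, !i) = q
  · have : w.pos (e a, !i) = w.pos (a, i) := by rw [hpos (a, !i), hy, Equiv.swap_apply_right, hx]
    simpa using congrArg Prod.snd (w.pos.injective this)
  · have : w.pos (e a, !i) = w.pos (a, !i) := by
      rw [hpos (a, !i), Equiv.swap_apply_of_ne_of_ne hne hy]
    have hfixed : e a = a := congrArg Prod.fst (w.pos.injective this)
    exact hpq (by rw [← hx, ← hmoved, hfixed])

lemma relabel_ne_flip [NeZero ℓ] (hκ : ∀ a, 0 < κ a) (hℓ : ∀ a, 2 * κ a ∣ ℓ) (l : ℕ)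
    (w : Simplex A ℓ m) (e : Equiv.Perm A) : w.relabel e ≠ w.flip κ l := by
  unfold flip
  split_ifs with hl hlm
  · exact fun h ↦ w.flipFirst_ne (eq_of_relabel_eq h rfl)
  · exact relabel_ne_flipMid hl hlm w e
  · exact fun h ↦ w.flipLast_ne hκ hℓ (eq_of_relabel_eq h rfl)

lemma coord_flip_of_le [NeZero ℓ] {l b : ℕ} (hl : l ≤ m) (hbl : b ≠ l) (w : Simplex A ℓ m) :
    (w.flip κ l).coord b = w.coord b := by
  funext x
  unfold flip
  split_ifs with hl0
  · unfold coord flipFirst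
    obtain hx | hx := eq_or_ne (w.pos x) 0
    · simp [hx, Nat.pos_of_ne_zero (hl0 ▸ hbl), Cell.oddEnd_flipOdd]
    · simp [hx]
  · have hswap : (Equiv.swap (Fin.ofNat (m + 1) (l - 1)) (Fin.ofNat (m + 1) l) (w.pos x) : ℕ) < b ↔
        (w.pos x : ℕ) < b := by
      rw [Equiv.swap_apply_def]
      have hl' := Nat.mod_eq_of_lt (show l < m + 1 by lia)
      have hl'' := Nat.mod_eq_of_lt (show l - 1 < m + 1 by lia)
      split_ifs with h h
      · simp only [h, Fin.val_ofNat, hl', hl'']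
        lia
      · simp only [h, Fin.val_ofNat, hl', hl'']
        lia
      · rfl
    simp only [coord, flipMid, Equiv.trans_apply, hswap]

section flipLast

variable {b : ℕ} {a : A} {w : Simplex A ℓ m}

lemma coord_of_pos_eq_last (hb : b ≤ m) {x : A × Bool} (hx : w.pos x = Fin.last m) :
    w.coord b x = (w.cell x).evenEnd :=
  if_neg (by simpa [hx] using hb)

variable [NeZero ℓ]

lemma coord_flipLast_true (hb : b ≤ m) :
    (w.flipLast κ).coord b (a, true) = w.coord b (a, true) := by
  by_cases h : w.pos (a, true) = Fin.last m ∧ ¬ (w.cell (a, true)).AtEnd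
  · rw [coord_of_pos_eq_last hb h.1, coord_of_pos_eq_last (w := w.flipLast κ) hb h.1]
    simp [flipLast, h, Cell.evenEnd_flipEven]
  · simp [coord, flipLast, h]

lemma coord_flipLast_false_modEq (hb : b ≤ m)
    (h : ¬ (w.pos (a, true) = Fin.last m ∧ (w.cell (a, true)).AtEnd)) :
    (w.flipLast κ).coord b (a, false) ≡ w.coord b (a, false) [MOD 2 * ℓ] := by
  by_cases hx : w.pos (a, false) = Fin.last m
  · rw [coord_of_pos_eq_last hb hx, coord_of_pos_eq_last (w := w.flipLast κ) hb hx]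
    simpa [flipLast, hx] using Cell.evenEnd_flipEven_modEq _
  · simpa [coord, flipLast, hx, h] using Nat.ModEq.refl _

lemma exists_coord_flipLast_false (hκ : ∀ a, 0 < κ a) (hℓ : ∀ a, 2 * κ a ∣ ℓ)
    (h : w.pos (a, true) = Fin.last m) (hend : (w.cell (a, true)).AtEnd)
    (heven : Even ((w.cell (a, false)).1 / κ a : ℕ)) :
    ∃ i, (2 * i + 2) * κ a ≤ ℓ ∧ ∀ b,
      w.coord b (a, false) ∈ Set.Icc (2 * i * (2 * κ a)) ((2 * i + 1) * (2 * κ a)) ∧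
      (w.flipLast κ).coord b (a, false) = w.coord b (a, false) + 2 * κ a := by
  obtain ⟨i, hi, hi', hiℓ⟩ := Cell.exists_mul_le_of_even (hκ a) (hℓ a) heven
  have hval := Cell.val_shift (hκ a) (hℓ a) (w.cell (a, false))
  rw [if_pos heven] at hval
  have hne : w.pos (a, false) ≠ Fin.last m := h ▸ w.pos.injective.ne (by simp)
  refine ⟨i, hiℓ, fun b ↦ ?_⟩
  have htoNat := (w.cell (a, false)).2.toNat_le
  have hsnd : ((w.cell (a, false)).shift (κ a)).2 = (w.cell (a, false)).2 := rfl
  simp only [coord, flipLast, hne, h, hend, and_self, if_true, if_false, Cell.oddEnd, Cell.evenEnd,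
    hval, hsnd, Set.mem_Icc]
  split_ifs <;> exact ⟨⟨by lia, by lia⟩, by lia⟩

end flipLast

end flip

variable {J : Type*} (col : A → J)

/-- Simplices are identified when they differ by a relabelling that preserves the colours `col`. -/
def relabelSetoid : Setoid (Simplex A ℓ m) where
  r w w' := ∃ e : Equiv.Perm A, (∀ a, col (e a) = col a) ∧ w.relabel e = w'
  iseqv :=
    { refl w := ⟨1, fun _ ↦ rfl, rfl⟩
      symm := by
        rintro w _ ⟨e, he, rfl⟩
        refine ⟨e.symm, fun a ↦ ?_, ?_⟩
        · rw [← he, Equiv.apply_symm_apply]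
        · refine Simplex.ext (funext fun x ↦ ?_) (Equiv.ext fun x ↦ ?_) <;> obtain ⟨a, i⟩ := x <;>
          simp [relabel]
      trans := by
        rintro w _ _ ⟨e, he, rfl⟩ ⟨e', he', rfl⟩
        exact ⟨e'.trans e, fun a ↦ (he _).trans (he' a), rfl⟩ }

end Simplex

/-- The simplices of the space of configurations of indistinguishable points of each colour. -/
def SimplexClass {A J : Type*} (col : A → J) (ℓ m : ℕ) : Type _ :=
  Quotient (Simplex.relabelSetoid (ℓ := ℓ) (m := m) col)

namespace SimplexClass

variable {A J : Type*} {col : A → J} {ℓ m : ℕ}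

instance [Finite A] : Fintype (SimplexClass col ℓ m) :=
  @Fintype.ofFinite _ (Quotient.finite _)

/-- The class of a simplex. -/
def mk (col : A → J) (w : Simplex A ℓ m) : SimplexClass col ℓ m :=
  Quotient.mk (Simplex.relabelSetoid col) w

/-- The cycle formed by the simplex classes. -/
def cycle [NeZero ℓ] {κ : J → ℕ} (hκ : ∀ j, 0 < κ j) (hℓ : ∀ j, 2 * κ j ∣ ℓ) :
    SimplexCycle (SimplexClass col ℓ m) (m + 1) where
  flip l := Quotient.map (Simplex.flip (κ ∘ col) l) fun w _ ⟨e, he, h⟩ ↦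
    ⟨e, he, h ▸ (Simplex.relabel_flip (κ ∘ col) (fun a ↦ congrArg κ (he a)) l w).symm⟩
  flip_flip l _ := Quotient.ind fun w ↦ congrArg (mk col) <|
    Simplex.flip_flip (fun a ↦ hκ (col a)) (fun a ↦ hℓ (col a)) l w
  flip_ne l _ := Quotient.ind fun w h ↦ by
    obtain ⟨e, -, he⟩ := Quotient.exact h.symm
    exact w.relabel_ne_flip (fun a ↦ hκ (col a)) (fun a ↦ hℓ (col a)) l e he

end SimplexClass

end Grid

/-! ### Counting the simplices crossed by the gauge -/

namespace Grid

variable {A J : Type*} {ℓ m : ℕ}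

/-- The gauge at the grid point with radial coordinate `r` and angular coordinate `s`. -/
def gauge (ℓ κ r s : ℕ) : ZMod 2 := if r = 2 * ℓ ∧ 2 * κ ≤ s ∧ s < 4 * κ then 1 else 0

lemma gauge_add_gauge_mul_gauge (κ r : ℕ) (c : Cell ℓ) :
    (gauge ℓ κ r c.evenEnd + gauge ℓ κ r c.oddEnd) * gauge ℓ κ r c.oddEnd =
      if r = 2 * ℓ ∧ c.evenEnd = 4 * κ ∧ c.oddEnd < 4 * κ then 1 else 0 := by
  unfold gauge Cell.evenEnd Cell.oddEnd
  have := c.2.toNat_le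
  split_ifs <;> first | rfl | lia

lemma gauge_add {κ i s : ℕ} (hκ : 0 < κ)
    (hs : s ∈ Set.Icc (2 * i * (2 * κ)) ((2 * i + 1) * (2 * κ))) :
    gauge ℓ κ (2 * ℓ) (s + 2 * κ) = gauge ℓ κ (2 * ℓ) s + if i = 0 then 1 else 0 := by
  obtain ⟨hlow, hhigh⟩ := hs
  unfold gauge
  obtain rfl | hi := eq_or_ne i 0
  · obtain h | h := Nat.lt_or_ge s (2 * κ)
    · rw [if_pos (by lia), if_neg (by lia), if_pos rfl, zero_add]
    · rw [if_neg (by lia), if_pos (by lia), if_pos rfl]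
      rfl
  · have := Nat.mul_le_mul_right (4 * κ) (Nat.one_le_iff_ne_zero.2 hi)
    rw [if_neg (by lia), if_neg (by lia), if_neg hi, add_zero]

lemma Cell.eq_of_evenEnd_eq {c c' : Cell ℓ} (h : c.oddEnd < c.evenEnd)
    (h' : c'.oddEnd < c'.evenEnd) (heq : c.evenEnd = c'.evenEnd) : c = c' := by
  obtain ⟨q, i⟩ := c
  obtain ⟨q', i'⟩ := c'
  cases i <;> cases i' <;> simp_all [evenEnd, oddEnd, Fin.ext_iff]

namespace Simplex

variable (κ : A → ℕ) (col : A → J) (τ : ℕ → J) (w : Simplex A ℓ m)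

/-- The gauge of the point `a` of the configuration at the vertex `b`. -/
def gauge (b : ℕ) (a : A) : ZMod 2 :=
  Grid.gauge ℓ (κ a) (w.coord b (a, true)) (w.coord b (a, false))

/-- The sum of the gauges of the points of colour `j` at the vertex `b`. -/
def gaugeSum [Fintype A] [DecidableEq J] (j : J) (b : ℕ) : ZMod 2 :=
  ∑ a with col a = j, w.gauge κ b a

/-- The points of the simplex cross the gauge once each: the edges `(t, t + 1)` moving the point `a`
are those of colour `τ t = col a` on which the gauge of `a` changes. -/
structure IsCrossing : Prop where
  col_eq : ∀ x, τ (w.pos x) = col x.1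
  pos_lt : ∀ a, w.pos (a, false) < w.pos (a, true)
  evenEnd_true : ∀ a, (w.cell (a, true)).evenEnd = 2 * ℓ
  evenEnd_false : ∀ a, (w.cell (a, false)).evenEnd = 4 * κ a
  oddEnd_false : ∀ a, (w.cell (a, false)).oddEnd < 4 * κ a

variable {κ col τ} {w}

lemma coord_succ {b : ℕ} {x : A × Bool} (h : (w.pos x : ℕ) ≠ b) :
    w.coord (b + 1) x = w.coord b x := by
  unfold coord
  split_ifs <;> first | rfl | lia

lemma gauge_succ {b : ℕ} {a : A} (h : ∀ i, (w.pos (a, i) : ℕ) ≠ b) :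
    w.gauge κ (b + 1) a = w.gauge κ b a := by
  simp only [gauge, coord_succ (h _)]

lemma edgeDiff_gaugeSum [Fintype A] [DecidableEq J] (j : J) (x : A × Bool) :
    SimplexCycle.edgeDiff (fun b w ↦ gaugeSum κ col w j b) (w.pos x) w =
      if col x.1 = j then w.gauge κ (w.pos x) x.1 + w.gauge κ (w.pos x + 1) x.1 else 0 := by
  classical
  simp only [SimplexCycle.edgeDiff, gaugeSum, ← Finset.sum_add_distrib]
  rw [Finset.sum_filter, Finset.sum_eq_single x.1 _ (by simp)]
  intro a _ ha
  rw [gauge_succ (fun i h ↦ ha (congrArg Prod.fst (w.pos.injective (Fin.ext h)))),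
    CharTwo.add_self_eq_zero, ite_self]

lemma gauge_mul_gauge_eq (a : A) :
    (w.gauge κ (w.pos (a, false)) a + w.gauge κ (w.pos (a, false) + 1) a) *
      (w.gauge κ (w.pos (a, true)) a + w.gauge κ (w.pos (a, true) + 1) a) =
      if w.pos (a, false) < w.pos (a, true) ∧ (w.cell (a, true)).evenEnd = 2 * ℓ ∧
        (w.cell (a, false)).evenEnd = 4 * κ a ∧ (w.cell (a, false)).oddEnd < 4 * κ a
      then 1 else 0 := by
  have hodd (s : ℕ) : Grid.gauge ℓ (κ a) (w.cell (a, true)).oddEnd s = 0 :=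
    if_neg fun h ↦ (w.cell (a, true)).oddEnd_lt.ne h.1
  have hne : w.pos (a, false) ≠ w.pos (a, true) := w.pos.injective.ne (by simp)
  obtain hlt | hlt := hne.lt_or_gt
  · have hlt' := Fin.lt_def.1 hlt
    simp only [gauge, coord, hlt, hlt', hlt'.not_gt, not_le.2 hlt', Nat.lt_succ_iff, lt_irrefl,
      le_refl, if_true, if_false, true_and, hlt'.le, hodd, add_zero, gauge_add_gauge_mul_gauge]
  · have hlt' := Fin.lt_def.1 hlt
    simp only [gauge, coord, hlt', hlt.not_gt, hlt'.trans (Nat.lt_succ_self _), if_true, false_and,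
      if_false, hodd, add_zero, zero_mul]

open Classical in
lemma prod_edgeDiff_gaugeSum [Fintype A] [DecidableEq J] :
    ∏ t ∈ Finset.range (m + 1),
        SimplexCycle.edgeDiff (fun b w ↦ gaugeSum κ col w (τ t) b) t w =
      if IsCrossing κ col τ w then 1 else 0 := by
  rw [Finset.prod_range, ← w.pos.prod_comp]
  simp only [edgeDiff_gaugeSum]
  rw [Fintype.prod_prod_type]
  have hpoint (a : A) : ∏ i, (if col a = τ (w.pos (a, i)) then
      w.gauge κ (w.pos (a, i)) a + w.gauge κ (w.pos (a, i) + 1) a else 0) =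
      if (∀ i, col a = τ (w.pos (a, i))) ∧ w.pos (a, false) < w.pos (a, true) ∧
        (w.cell (a, true)).evenEnd = 2 * ℓ ∧ (w.cell (a, false)).evenEnd = 4 * κ a ∧
        (w.cell (a, false)).oddEnd < 4 * κ a then 1 else 0 := by
    rw [Fintype.prod_bool, mul_comm, ite_zero_mul_ite_zero, gauge_mul_gauge_eq, ← ite_and]
    simp only [Bool.forall_bool]
  simp only [hpoint, Finset.prod_boole, Finset.mem_univ, true_imp_iff]
  congr 1
  rw [eq_iff_iff]
  exact ⟨fun h ↦ ⟨fun x ↦ ((h x.1).1 x.2).symm, fun a ↦ (h a).2.1, fun a ↦ (h a).2.2.1,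
    fun a ↦ (h a).2.2.2.1, fun a ↦ (h a).2.2.2.2⟩, fun h a ↦ ⟨fun i ↦ (h.col_eq (a, i)).symm,
    h.pos_lt a, h.evenEnd_true a, h.evenEnd_false a, h.oddEnd_false a⟩⟩

lemma IsCrossing.relabel {κ : J → ℕ} (h : w.IsCrossing (κ ∘ col) col τ) {e : Equiv.Perm A}
    (he : ∀ a, col (e a) = col a) : (w.relabel e).IsCrossing (κ ∘ col) col τ where
  col_eq x := (h.col_eq _).trans (he x.1)
  pos_lt a := h.pos_lt (e a)
  evenEnd_true a := h.evenEnd_true (e a)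
  evenEnd_false a := (h.evenEnd_false (e a)).trans (congrArg (4 * κ ·) (he a))
  oddEnd_false a := (h.oddEnd_false (e a)).trans_eq (congrArg (4 * κ ·) (he a))

/-- The point that is moved along the edge `(t, t + 1)`. -/
def owner (w : Simplex A ℓ m) (t : ℕ) : A := (w.pos.symm (Fin.ofNat (m + 1) t)).1

lemma owner_pos (x : A × Bool) : w.owner (w.pos x) = x.1 := by
  simp [owner]

lemma exists_pos_owner {t : ℕ} (ht : t ≤ m) : ∃ i, (w.pos (w.owner t, i) : ℕ) = t :=
  ⟨(w.pos.symm (Fin.ofNat (m + 1) t)).2, by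
    simp [owner, Nat.mod_eq_of_lt (Nat.lt_succ_of_le ht)]⟩

variable (κ col τ w) in
/-- The crossing simplices whose first `2k` edges move `k` points one after the other. -/
def IsMatched (k : ℕ) : Prop :=
  w.IsCrossing κ col τ ∧ ∀ s < k, w.owner (2 * s) = w.owner (2 * s + 1)

lemma IsMatched.relabel {κ : J → ℕ} {k : ℕ} (h : w.IsMatched (κ ∘ col) col τ k)
    {e : Equiv.Perm A} (he : ∀ a, col (e a) = col a) :
    (w.relabel e).IsMatched (κ ∘ col) col τ k :=
  ⟨h.1.relabel he, fun s hs ↦ congrArg e.symm (h.2 s hs)⟩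

lemma IsMatched.pos_eq {n : ℕ} (h : w.IsMatched κ col τ n) (hm : m + 1 = 2 * n) (a : A) :
    Even (w.pos (a, false) : ℕ) ∧ (w.pos (a, true) : ℕ) = w.pos (a, false) + 1 := by
  have hpos := Fin.lt_def.1 (h.1.pos_lt a)
  obtain ⟨s, hs | hs⟩ := Nat.even_or_odd' (w.pos (a, false) : ℕ)
  · obtain ⟨i, hi⟩ := exists_pos_owner (w := w) (show 2 * s + 1 ≤ m by lia)
    rw [← h.2 s (by lia), ← hs, owner_pos] at hi
    cases i
    · lia
    · exact ⟨⟨s, by lia⟩, hi⟩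
  · obtain ⟨i, hi⟩ := exists_pos_owner (w := w) (show 2 * s ≤ m by lia)
    rw [h.2 s (by lia), ← hs, owner_pos] at hi
    cases i <;> lia

lemma IsMatched.exists_relabel_eq [Finite A] {κ : J → ℕ} {n : ℕ} {w' : Simplex A ℓ m}
    (h : w.IsMatched (κ ∘ col) col τ n) (h' : w'.IsMatched (κ ∘ col) col τ n)
    (hm : m + 1 = 2 * n) : ∃ e : Equiv.Perm A, (∀ a, col (e a) = col a) ∧ w.relabel e = w' := by
  have key (a : A) : ∃ b, ∀ i, w.pos (b, i) = w'.pos (a, i) := by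
    obtain ⟨i, hi⟩ := exists_pos_owner (w := w)
      (show (w'.pos (a, false) : ℕ) ≤ m from Nat.le_of_lt_succ (Fin.isLt _))
    have hb := h.pos_eq hm (w.owner (w'.pos (a, false)))
    have ha := h'.pos_eq hm a
    cases i with
    | false => exact ⟨_, Bool.forall_bool.2 ⟨Fin.ext hi, Fin.ext (by lia)⟩⟩
    | true => grind
  choose e he using key
  have hinj : Function.Injective e := fun a b hab ↦ by
    have := (he a true).symm.trans ((congrArg (fun a ↦ w.pos (a, true)) hab).trans (he b true))
    exact congrArg Prod.fst (w'.pos.injective this)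
  have hcol (a : A) : col (e a) = col a := by
    rw [← h.1.col_eq (e a, true), he, h'.1.col_eq]
  refine ⟨Equiv.ofBijective e (Finite.injective_iff_bijective.1 hinj), hcol,
    Simplex.ext (funext ?_) (Equiv.ext fun x ↦ he x.1 x.2)⟩
  rintro ⟨a, i⟩
  cases i with
  | false =>
    exact Cell.eq_of_evenEnd_eq ((h.1.oddEnd_false _).trans_eq (h.1.evenEnd_false _).symm)
      ((h'.1.oddEnd_false a).trans_eq (h'.1.evenEnd_false a).symm)
      ((h.1.evenEnd_false _).trans ((congrArg (4 * κ ·) (hcol a)).trans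
        (h'.1.evenEnd_false a).symm))
  | true =>
    exact Cell.eq_of_evenEnd_eq ((Cell.oddEnd_lt _).trans_eq (h.1.evenEnd_true _).symm)
      ((Cell.oddEnd_lt _).trans_eq (h'.1.evenEnd_true a).symm)
      ((h.1.evenEnd_true _).trans (h'.1.evenEnd_true a).symm)

lemma IsMatched.flipMid {k : ℕ} (h : w.IsMatched κ col τ k) (hk : 2 * k + 1 ≤ m)
    (hne : w.owner (2 * k) ≠ w.owner (2 * k + 1)) (hτ : τ (2 * k) = τ (2 * k + 1)) :
    (w.flipMid (2 * k + 1)).IsMatched κ col τ k ∧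
      (w.flipMid (2 * k + 1)).owner (2 * k) ≠ (w.flipMid (2 * k + 1)).owner (2 * k + 1) := by
  set p := Fin.ofNat (m + 1) (2 * k) with hp
  set q := Fin.ofNat (m + 1) (2 * k + 1) with hq
  have hp' : (p : ℕ) = 2 * k := Nat.mod_eq_of_lt (by lia)
  have hq' : (q : ℕ) = 2 * k + 1 := Nat.mod_eq_of_lt (by lia)
  have howner (t : ℕ) : (w.flipMid (2 * k + 1)).owner t =
      (w.pos.symm (Equiv.swap p q (Fin.ofNat (m + 1) t))).1 := rfl
  refine ⟨⟨⟨fun x ↦ ?_, fun a ↦ ?_, h.1.evenEnd_true, h.1.evenEnd_false, h.1.oddEnd_false⟩,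
    fun s hs ↦ ?_⟩, ?_⟩
  · rw [← h.1.col_eq x]
    change τ (Equiv.swap p q (w.pos x)) = _
    rw [Equiv.swap_apply_def]
    split_ifs with hx hx
    · rw [hx, hp', hq', hτ]
    · rw [hx, hp', hq', hτ]
    · rfl
  · change Equiv.swap p q (w.pos (a, false)) < Equiv.swap p q (w.pos (a, true))
    have hlt := h.1.pos_lt a
    have : ¬ (w.pos (a, false) = p ∧ w.pos (a, true) = q) := fun ⟨h0, h1⟩ ↦ hne <| by
      rw [owner, owner, ← hp, ← hq, ← h0, ← h1, Equiv.symm_apply_apply, Equiv.symm_apply_apply]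
    grind
  · have hval {t : ℕ} (ht : t < 2 * k) : (Fin.ofNat (m + 1) t : ℕ) = t :=
      Nat.mod_eq_of_lt (by lia)
    have hfix {t : ℕ} (ht : t < 2 * k) : (w.flipMid (2 * k + 1)).owner t = w.owner t := by
      have := hval ht
      rw [howner, Equiv.swap_apply_of_ne_of_ne (Fin.ne_of_val_ne (by lia))
        (Fin.ne_of_val_ne (by lia)), owner]
    rw [hfix (by lia), hfix (by lia), h.2 s hs]
  · rw [howner, howner, ← hp, ← hq, Equiv.swap_apply_left, Equiv.swap_apply_right]
    exact hne.symm

lemma gaugeSum_relabel [Fintype A] [DecidableEq J] {κ : J → ℕ} {e : Equiv.Perm A}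
    (he : ∀ a, col (e a) = col a) (j : J) (b : ℕ) :
    (w.relabel e).gaugeSum (κ ∘ col) col j b = w.gaugeSum (κ ∘ col) col j b := by
  refine Finset.sum_equiv e (by simp [he]) fun a _ ↦ ?_
  simp only [gauge, coord_relabel, Function.comp_apply, he]

lemma exists_isMatched [Fintype A] [Nonempty A] (κ : A → ℕ) (col : A → J) (hκ : ∀ a, 0 < κ a)
    (hℓ : ∀ a, 2 * κ a ≤ ℓ) (hm : m + 1 = 2 * Fintype.card A) :
    ∃ (τ : ℕ → J) (w : Simplex A ℓ m), w.IsMatched κ col τ (Fintype.card A) := by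
  let pos : A × Bool ≃ Fin (m + 1) :=
    ((Fintype.equivFin A).prodCongr finTwoEquiv.symm).trans <|
      finProdFinEquiv.trans <| finCongr <| by lia
  have hpos (a : A) (i : Bool) : (pos (a, i) : ℕ) = i.toNat + 2 * Fintype.equivFin A a := by
    cases i <;> exact finProdFinEquiv_apply_val _
  let cell : A × Bool → Cell ℓ
  | (a, true) => (⟨ℓ - 1, by have := hκ a; have := hℓ a; lia⟩, true)
  | (a, false) => (⟨2 * κ a - 1, by have := hκ a; have := hℓ a; lia⟩, true)
  let w : Simplex A ℓ m := ⟨cell, pos⟩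
  refine ⟨fun t ↦ col (w.owner t), w, ⟨⟨fun x ↦ congrArg col (owner_pos x), fun a ↦ ?_,
    fun a ↦ ?_, fun a ↦ ?_, fun a ↦ ?_⟩, fun s hs ↦ ?_⟩⟩
  · simp [w, Fin.lt_def, hpos]
  · have := hκ a
    have := hℓ a
    simp only [w, cell, Cell.evenEnd, Bool.toNat_true]
    lia
  · have := hκ a
    simp only [w, cell, Cell.evenEnd, Bool.toNat_true]
    lia
  · have := hκ a
    simp only [w, cell, Cell.oddEnd]
    lia
  · obtain ⟨a, ha⟩ := (Fintype.equivFin A).surjective ⟨s, hs⟩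
    have h0 : (w.pos (a, false) : ℕ) = 2 * s := by simp [w, hpos, ha]
    have h1 : (w.pos (a, true) : ℕ) = 2 * s + 1 := by simp [w, hpos, ha, add_comm]
    rw [← h0, owner_pos, h0, ← h1, owner_pos]

end Simplex

namespace SimplexClass

variable [NeZero ℓ] {κ : J → ℕ} {col : A → J} {τ : ℕ → J}

/-- The sum of the gauges of the points of colour `j` at the vertex `b`. -/
def gaugeSum [Fintype A] [DecidableEq J] (κ : J → ℕ) (j : J) (b : ℕ) (s : SimplexClass col ℓ m) :
    ZMod 2 :=
  Quotient.lift (fun w ↦ w.gaugeSum (κ ∘ col) col j b)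
    (by rintro w _ ⟨e, he, rfl⟩; exact (Simplex.gaugeSum_relabel he j b).symm) s

/-- The simplices of the class are crossing, and their first `2k` edges move `k` points one after
the other. -/
def IsMatched (κ : J → ℕ) (τ : ℕ → J) (k : ℕ) (s : SimplexClass col ℓ m) : Prop :=
  Quotient.lift (fun w ↦ w.IsMatched (κ ∘ col) col τ k) (fun w w' h ↦ by
    obtain ⟨e', he', hw'⟩ := (Simplex.relabelSetoid col).symm h
    obtain ⟨e, he, hw⟩ := h
    exact propext ⟨fun h ↦ hw ▸ h.relabel he, fun h ↦ hw' ▸ h.relabel he'⟩) s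

open Classical in
lemma sum_isMatched_succ [Finite A] (hκ : ∀ j, 0 < κ j) (hℓ : ∀ j, 2 * κ j ∣ ℓ) {k : ℕ}
    (hk : 2 * k + 1 ≤ m) (hτ : τ (2 * k) = τ (2 * k + 1)) :
    ∑ s : SimplexClass col ℓ m, (if s.IsMatched κ τ k then 1 else 0 : ZMod 2) =
      ∑ s : SimplexClass col ℓ m, if s.IsMatched κ τ (k + 1) then 1 else 0 := by
  rw [← sub_eq_zero, CharTwo.sub_eq_add, ← Finset.sum_add_distrib]
  let P (w : Simplex A ℓ m) : Prop :=
    w.IsMatched (κ ∘ col) col τ k ∧ w.owner (2 * k) ≠ w.owner (2 * k + 1)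
  have hflip (w : Simplex A ℓ m) : w.flip (κ ∘ col) (2 * k + 1) = w.flipMid (2 * k + 1) := by
    simp [Simplex.flip, hk]
  have hP (w : Simplex A ℓ m) : P (w.flip (κ ∘ col) (2 * k + 1)) ↔ P w := by
    rw [hflip]
    refine ⟨fun h ↦ ?_, fun h ↦ h.1.flipMid hk h.2 hτ⟩
    simpa only [Simplex.flipMid_flipMid] using h.1.flipMid hk h.2 hτ
  have hsum (w : Simplex A ℓ m) : (if (mk col w).IsMatched κ τ k then 1 else 0 : ZMod 2) +
      (if (mk col w).IsMatched κ τ (k + 1) then 1 else 0) = if P w then 1 else 0 := by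
    have hsucc : w.IsMatched (κ ∘ col) col τ (k + 1) ↔
        w.IsMatched (κ ∘ col) col τ k ∧ w.owner (2 * k) = w.owner (2 * k + 1) := by
      simp only [Simplex.IsMatched, Nat.forall_lt_succ_right, and_assoc]
    change (if w.IsMatched (κ ∘ col) col τ k then 1 else 0 : ZMod 2) +
      (if w.IsMatched (κ ∘ col) col τ (k + 1) then 1 else 0) = _
    simp only [hsucc, P]
    split_ifs <;> first | rfl | tauto
  refine (cycle hκ hℓ).sum_eq_zero (l := 2 * k + 1) (by lia) (Quotient.ind fun w ↦ ?_)
  exact (hsum _).trans ((if_congr (hP w) rfl rfl).trans (hsum w).symm)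

open Classical in
lemma sum_isMatched [Finite A] (hκ : ∀ j, 0 < κ j) (hℓ : ∀ j, 2 * κ j ∣ ℓ) {n : ℕ}
    (hm : m + 1 = 2 * n) {w : Simplex A ℓ m} (hw : w.IsMatched (κ ∘ col) col τ n) :
    ∑ s : SimplexClass col ℓ m, (if s.IsMatched κ τ 0 then 1 else 0 : ZMod 2) = 1 := by
  have hτ {k : ℕ} (hk : k < n) : τ (2 * k) = τ (2 * k + 1) := by
    obtain ⟨i, hi⟩ := w.exists_pos_owner (show 2 * k ≤ m by lia)
    obtain ⟨i', hi'⟩ := w.exists_pos_owner (show 2 * k + 1 ≤ m by lia)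
    have h := hw.1.col_eq (w.owner (2 * k), i)
    have h' := hw.1.col_eq (w.owner (2 * k + 1), i')
    rw [hi] at h
    rw [hi', ← hw.2 k hk] at h'
    exact h.trans h'.symm
  have hstep : ∀ k ≤ n, ∑ s : SimplexClass col ℓ m, (if s.IsMatched κ τ 0 then 1 else 0 : ZMod 2) =
      ∑ s : SimplexClass col ℓ m, if s.IsMatched κ τ k then 1 else 0 := by
    intro k
    induction k with
    | zero => exact fun _ ↦ rfl
    | succ k ih => exact fun hk ↦ (ih (by lia)).trans (sum_isMatched_succ hκ hℓ (by lia) (hτ hk))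
  rw [hstep n le_rfl, Finset.sum_eq_single (mk col w) _ (by simp)]
  · exact if_pos hw
  · rintro ⟨w'⟩ - hne
    refine if_neg fun hw' ↦ hne ?_
    exact (Quotient.sound (hw.exists_relabel_eq hw' hm)).symm

theorem sum_prod_edgeDiff_gaugeSum [Fintype A] [DecidableEq J] (hκ : ∀ j, 0 < κ j)
    (hℓ : ∀ j, 2 * κ j ∣ ℓ) {n : ℕ} (hm : m + 1 = 2 * n) {w : Simplex A ℓ m}
    (hw : w.IsMatched (κ ∘ col) col τ n) :
    ∑ s : SimplexClass col ℓ m,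
      ∏ t ∈ Finset.range (m + 1), SimplexCycle.edgeDiff (gaugeSum κ (τ t)) t s = 1 := by
  classical
  rw [← sum_isMatched hκ hℓ hm hw]
  refine Finset.sum_congr rfl fun s _ ↦ ?_
  obtain ⟨w⟩ := s
  refine (w.prod_edgeDiff_gaugeSum (κ := κ ∘ col) (col := col) (τ := τ)).trans <|
    if_congr (and_iff_left ?_).symm rfl rfl
  exact fun _ h ↦ absurd h (Nat.not_lt_zero _)

end SimplexClass
end Grid

/-! ### The subdivided surfaces -/

namespace Ng

open Grid

section gridPoint

variable {ℓ κ g u v v' : ℕ}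

/-- The point of the rectangle of polar coordinates with radial grid coordinate `u` and angular grid
coordinate `v`. -/
def gridPoint (ℓ κ u v : ℕ) : ℝ × ℝ := (u / (2 * ℓ : ℕ), v / (2 * κ : ℕ))

lemma gridPoint_mem_rect (hκ : 0 < κ) (hℓ : ℓ = 2 * κ * g) (hu : u ≤ 2 * ℓ) (hv : v ≤ 2 * ℓ) :
    gridPoint ℓ κ u v ∈ rect g := by
  refine ⟨⟨div_nonneg u.cast_nonneg (Nat.cast_nonneg _),
    div_le_one_of_le₀ (by exact_mod_cast hu) (Nat.cast_nonneg _)⟩,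
    ⟨div_nonneg v.cast_nonneg (Nat.cast_nonneg _), ?_⟩⟩
  rw [gridPoint, div_le_iff₀ (by positivity)]
  exact_mod_cast hv.trans_eq (by rw [hℓ]; ring)

lemma gauge_gridPoint (hκ : 0 < κ) (hℓ : 0 < ℓ) (u v : ℕ) :
    gauge (gridPoint ℓ κ u v) = Grid.gauge ℓ κ u v := by
  refine if_congr (and_congr ?_ (and_congr ?_ ?_)) rfl rfl
  · rw [gridPoint, div_eq_one_iff_eq (by positivity)]
    exact Nat.cast_inj
  · rw [gridPoint, one_le_div₀ (by positivity)]
    exact Nat.cast_le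
  · rw [gridPoint, div_lt_iff₀ (by positivity), ← Nat.cast_lt (α := ℝ)]
    push_cast
    ring_nf

lemma polar_gridPoint_zero (v v' : ℕ) :
    polar g (gridPoint ℓ κ 0 v) = polar g (gridPoint ℓ κ 0 v') := by
  simpa [gridPoint] using polar_zero _ _

lemma polar_gridPoint_add (hκ : 0 < κ) (hℓ : 0 < ℓ) {i : ℕ} (hi : i < g)
    (hv : v ∈ Set.Icc (2 * i * (2 * κ)) ((2 * i + 1) * (2 * κ))) :
    polar g (gridPoint ℓ κ (2 * ℓ) (v + 2 * κ)) = polar g (gridPoint ℓ κ (2 * ℓ) v) := by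
  have hκ' : (0 : ℝ) < (2 * κ : ℕ) := by positivity
  have hone : ((2 * ℓ : ℕ) : ℝ) / (2 * ℓ : ℕ) = 1 := div_self (by positivity)
  rw [gridPoint, gridPoint, hone, Nat.cast_add, add_div, div_self hκ'.ne']
  refine (polar_add_one hi ⟨?_, ?_⟩).symm
  · rw [le_div_iff₀ hκ']
    exact_mod_cast hv.1
  · rw [div_le_iff₀ hκ']
    exact_mod_cast hv.2

lemma polar_gridPoint_of_modEq (hκ : 0 < κ) (hg : 1 ≤ g) (hℓ : ℓ = 2 * κ * g) (hv : v ≤ 2 * ℓ)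
    (hv' : v' ≤ 2 * ℓ) (h : v' ≡ v [MOD 2 * ℓ]) :
    polar g (gridPoint ℓ κ u v') = polar g (gridPoint ℓ κ u v) ∧
      Grid.gauge ℓ κ u v' = Grid.gauge ℓ κ u v := by
  have hpolar : polar g (gridPoint ℓ κ u (2 * ℓ)) = polar g (gridPoint ℓ κ u 0) := by
    have : ((2 * ℓ : ℕ) : ℝ) / (2 * κ : ℕ) = ((0 : ℕ) : ℝ) / (2 * κ : ℕ) + 2 * g := by
      rw [hℓ]
      push_cast
      field_simp
      ring
    rw [gridPoint, gridPoint, this, polar_add_period hg]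
  have hle : 4 * κ ≤ 2 * ℓ := by have := Nat.mul_le_mul_left (4 * κ) hg; lia
  have hgauge : Grid.gauge ℓ κ u (2 * ℓ) = Grid.gauge ℓ κ u 0 := by
    rw [Grid.gauge, if_neg (by lia), Grid.gauge, if_neg (by lia)]
  have hmod {x y : ℕ} (h : x ≡ y [MOD 2 * ℓ]) (hx : x < 2 * ℓ) (hy : y = 2 * ℓ) : x = 0 := by
    rwa [hy, Nat.ModEq, Nat.mod_self, Nat.mod_eq_of_lt hx] at h
  obtain hlt | heq := hv.lt_or_eq <;> obtain hlt' | heq' := hv'.lt_or_eq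
  · rw [h.eq_of_lt_of_lt hlt' hlt]
    exact ⟨rfl, rfl⟩
  · rw [hmod h.symm hlt heq', heq']
    exact ⟨hpolar, hgauge⟩
  · rw [hmod h hlt' heq, heq]
    exact ⟨hpolar.symm, hgauge.symm⟩
  · rw [heq, heq']
    exact ⟨rfl, rfl⟩

end gridPoint

section vertex

variable {A : Type*} {ℓ m : ℕ} {κ : A → ℕ} {a : A} {g : ℕ}

/-- The configuration at the vertex `b` of the simplex `w`. -/
def vertex (κ : A → ℕ) (w : Simplex A ℓ m) (b : ℕ) (a : A) : ℝ × ℝ :=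
  gridPoint ℓ (κ a) (w.coord b (a, true)) (w.coord b (a, false))

lemma vertex_mem_rect (hκ : 0 < κ a) (hℓ : ℓ = 2 * κ a * g) (w : Simplex A ℓ m) (b : ℕ) :
    vertex κ w b a ∈ rect g :=
  gridPoint_mem_rect hκ hℓ (w.coord_le b _) (w.coord_le b _)

lemma dist_vertex_le (w : Simplex A ℓ m) (b b' : ℕ) (a : A) (hκℓ : κ a ≤ ℓ) (hκ : 0 < κ a) :
    dist (vertex κ w b a) (vertex κ w b' a) ≤ 1 / (2 * κ a) := by
  have hcoord {x y : ℕ} (hx : x ≤ y + 1) (hy : y ≤ x + 1) {p : ℕ} (hp : κ a ≤ p) :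
      dist ((x : ℝ) / (2 * p : ℕ)) (y / (2 * p : ℕ)) ≤ 1 / (2 * κ a) := by
    have hx' : (x : ℝ) ≤ y + 1 := by exact_mod_cast hx
    have hy' : (y : ℝ) ≤ x + 1 := by exact_mod_cast hy
    rw [Real.dist_eq, ← sub_div, abs_div, Nat.abs_cast]
    push_cast
    gcongr
    exact abs_sub_le_iff.2 ⟨by linarith, by linarith⟩
  have hle (x : A × Bool) (b b' : ℕ) : w.coord b x ≤ w.coord b' x + 1 := by
    have := (w.cell x).2.toNat_le
    unfold Simplex.coord Cell.evenEnd Cell.oddEnd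
    split_ifs <;> lia
  exact max_le (hcoord (hle _ _ _) (hle _ _ _) hκℓ) (hcoord (hle _ _ _) (hle _ _ _) le_rfl)

variable [NeZero ℓ]

lemma exists_polar_vertex_flipLast_of_even (hκ : ∀ a, 0 < κ a) (hdvd : ∀ a, 2 * κ a ∣ ℓ)
    (hℓ : ℓ = 2 * κ a * g) {w : Simplex A ℓ m} (hpos : w.pos (a, true) = Fin.last m)
    (hend : (w.cell (a, true)).AtEnd) (heven : Even ((w.cell (a, false)).1 / κ a : ℕ)) :
    ∃ d, ∀ b ≤ m, polar g (vertex κ (w.flipLast κ) b a) = polar g (vertex κ w b a) ∧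
      (w.flipLast κ).gauge κ b a = w.gauge κ b a + d := by
  obtain ⟨i, hi, h⟩ := Simplex.exists_coord_flipLast_false hκ hdvd hpos hend heven
  have hig : i < g := by
    have : (2 * κ a) * (i + 1) ≤ 2 * κ a * g := by lia
    exact Nat.le_of_mul_le_mul_left this (by have := hκ a; lia)
  simp only [vertex, Simplex.gauge]
  obtain hend | hend := hend
  · refine ⟨0, fun b hb ↦ ?_⟩
    rw [Simplex.coord_flipLast_true hb, Simplex.coord_of_pos_eq_last hb hpos, hend]
    exact ⟨polar_gridPoint_zero _ _, by simp [Grid.gauge, eq_comm, NeZero.ne ℓ]⟩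
  · refine ⟨if i = 0 then 1 else 0, fun b hb ↦ ?_⟩
    rw [Simplex.coord_flipLast_true hb, Simplex.coord_of_pos_eq_last hb hpos, hend, (h b).2]
    exact ⟨polar_gridPoint_add (hκ a) (NeZero.pos ℓ) hig (h b).1, Grid.gauge_add (hκ a) (h b).1⟩

lemma exists_polar_vertex_flipLast (hκ : ∀ a, 0 < κ a) (hdvd : ∀ a, 2 * κ a ∣ ℓ) (hg : 1 ≤ g)
    (hℓ : ℓ = 2 * κ a * g) (w : Simplex A ℓ m) :
    ∃ d, ∀ b ≤ m, polar g (vertex κ (w.flipLast κ) b a) = polar g (vertex κ w b a) ∧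
      (w.flipLast κ).gauge κ b a = w.gauge κ b a + d := by
  by_cases hlast : w.pos (a, true) = Fin.last m ∧ (w.cell (a, true)).AtEnd
  · obtain ⟨hpos, hend⟩ := hlast
    by_cases heven : Even ((w.cell (a, false)).1 / κ a : ℕ)
    · exact exists_polar_vertex_flipLast_of_even hκ hdvd hℓ hpos hend heven
    · have hne : w.pos (a, false) ≠ Fin.last m := hpos ▸ w.pos.injective.ne (by simp)
      have hcell : (w.flipLast κ).cell (a, false) = (w.cell (a, false)).shift (κ a) := by
        simp [Simplex.flipLast, hne, hpos, hend]
      obtain ⟨d, hd⟩ := exists_polar_vertex_flipLast_of_even hκ hdvd hℓ (w := w.flipLast κ) hpos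
        (by simp [Simplex.flipLast, hend])
        (by rw [hcell]; exact (Cell.even_shift_div (hκ a) (hdvd a) _).2 heven)
      rw [Simplex.flipLast_flipLast hκ hdvd] at hd
      refine ⟨d, fun b hb ↦ ⟨(hd b hb).1.symm, ?_⟩⟩
      rw [(hd b hb).2, add_assoc, CharTwo.add_self_eq_zero, add_zero]
  · refine ⟨0, fun b hb ↦ ?_⟩
    simp only [vertex, Simplex.gauge, Simplex.coord_flipLast_true hb, add_zero]
    exact polar_gridPoint_of_modEq (hκ a) hg hℓ (w.coord_le b _) (Simplex.coord_le _ b _)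
      (Simplex.coord_flipLast_false_modEq hb hlast)

lemma exists_polar_vertex_flip (hκ : ∀ a, 0 < κ a) (hdvd : ∀ a, 2 * κ a ∣ ℓ) (hg : 1 ≤ g)
    (hℓ : ℓ = 2 * κ a * g) {l : ℕ} (hl : l ≤ m + 1) (w : Simplex A ℓ m) :
    ∃ d, ∀ b ≤ m + 1, b ≠ l → polar g (vertex κ (w.flip κ l) b a) = polar g (vertex κ w b a) ∧
      (w.flip κ l).gauge κ b a = w.gauge κ b a + d := by
  obtain hl | rfl := Nat.le_succ_iff.1 hl
  · refine ⟨0, fun b _ hbl ↦ ?_⟩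
    simp only [vertex, Simplex.gauge, Simplex.coord_flip_of_le hl hbl, add_zero, and_self]
  · obtain ⟨d, hd⟩ := exists_polar_vertex_flipLast hκ hdvd hg hℓ w
    have hflip : w.flip κ (m + 1) = w.flipLast κ := by simp [Simplex.flip]
    exact ⟨d, fun b hb hbl ↦ hflip ▸ hd b (by lia)⟩

end vertex

section classPoint

variable {J : Type*} {n g κ : J → ℕ} {ℓ m : ℕ}

lemma prodPolar_vertex_relabel (w : Simplex ((j : J) × Fin (n j)) ℓ m)
    {e : Equiv.Perm ((j : J) × Fin (n j))} (he : ∀ a, (e a).1 = a.1) (b : ℕ) :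
    prodPolar n g (vertex (κ ∘ Sigma.fst) (w.relabel e) b) =
      prodPolar n g (vertex (κ ∘ Sigma.fst) w b) := by
  symm
  refine SP.prodMk_eq_prodMk.2 ⟨fun j ↦ (Equiv.sigmaSubtype j).symm.trans
    ((e.subtypePerm fun a ↦ by rw [he]).trans (Equiv.sigmaSubtype j)), fun j i ↦ ?_⟩
  have hmk (x : {a : (j : J) × Fin (n j) // a.1 = j}) : ⟨j, Equiv.sigmaSubtype j x⟩ = x.1 :=
    congrArg Subtype.val ((Equiv.sigmaSubtype j).symm_apply_apply x)
  have hvertex : vertex (κ ∘ Sigma.fst) (w.relabel e) b ⟨j, i⟩ =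
      vertex (κ ∘ Sigma.fst) w b (e ⟨j, i⟩) := by
    simp only [vertex, Simplex.coord_relabel, Function.comp_apply, he]
  rw [hvertex]
  exact congrArg (fun a ↦ polar (g j) (vertex (κ ∘ Sigma.fst) w b a)) (hmk ⟨e ⟨j, i⟩, he _⟩)

/-- The point of the product of symmetric products at the vertex `b` of a class of simplices. -/
def classPoint (g κ : J → ℕ) (b : ℕ) (s : SimplexClass (Sigma.fst : (j : J) × Fin (n j) → J) ℓ m) :
    ∀ j, SP (n j) (Ng (g j)) :=
  Quotient.lift (fun w ↦ prodPolar n g (vertex (κ ∘ Sigma.fst) w b))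
    (by rintro w _ ⟨e, he, rfl⟩; exact (prodPolar_vertex_relabel w he b).symm) s

variable [NeZero ℓ]

lemma isVertexFunction_comp_classPoint (hκ : ∀ j, 0 < κ j) (hdvd : ∀ j, 2 * κ j ∣ ℓ)
    (hg : ∀ j, 1 ≤ g j) (hℓ : ∀ j, ℓ = 2 * κ j * g j) (c : (∀ j, SP (n j) (Ng (g j))) → ZMod 2) :
    (SimplexClass.cycle (m := m) hκ hdvd).IsVertexFunction
      fun b s ↦ c (classPoint (n := n) g κ b s) := by
  rintro l hl ⟨w⟩ b hb hbl
  have hpolar (a : (j : J) × Fin (n j)) :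
      polar (g a.1) (vertex (κ ∘ Sigma.fst) (w.flip (κ ∘ Sigma.fst) l) b a) =
        polar (g a.1) (vertex (κ ∘ Sigma.fst) w b a) := by
    obtain ⟨d, hd⟩ := exists_polar_vertex_flip (κ := κ ∘ Sigma.fst) (fun a ↦ hκ a.1)
      (fun a ↦ hdvd a.1) (hg a.1) (hℓ a.1) hl w
    exact (hd b hb hbl).1
  exact congrArg (fun z ↦ c (SP.prodMk z)) (funext hpolar)

lemma isCocyclePotential_gaugeSum [DecidableEq J] [Fintype J] (hκ : ∀ j, 0 < κ j)
    (hdvd : ∀ j, 2 * κ j ∣ ℓ) (hg : ∀ j, 1 ≤ g j) (hℓ : ∀ j, ℓ = 2 * κ j * g j) (j : J) :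
    (SimplexClass.cycle (m := m) (col := (Sigma.fst : (j : J) × Fin (n j) → J))
      hκ hdvd).IsCocyclePotential (SimplexClass.gaugeSum κ j) := by
  rintro l hl ⟨w⟩
  choose d hd using fun a : (j : J) × Fin (n j) ↦ exists_polar_vertex_flip (κ := κ ∘ Sigma.fst)
    (fun a ↦ hκ a.1) (fun a ↦ hdvd a.1) (hg a.1) (hℓ a.1) hl w
  refine ⟨∑ a with a.1 = j, d a, fun b hb hbl ↦ ?_⟩
  exact (Finset.sum_congr rfl fun a _ ↦ (hd a b hb hbl).2).trans Finset.sum_add_distrib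

lemma gaugeSum_eq_sum_gauge [DecidableEq J] [Fintype J] (hκ : ∀ j, 0 < κ j) (j : J)
    (w : Simplex ((j : J) × Fin (n j)) ℓ m) (b : ℕ) :
    w.gaugeSum (κ ∘ Sigma.fst) Sigma.fst j b =
      ∑ i, gauge (vertex (κ ∘ Sigma.fst) w b ⟨j, i⟩) := by
  rw [Simplex.gaugeSum, Finset.sum_filter, Fintype.sum_sigma, Finset.sum_eq_single j]
  · exact Finset.sum_congr rfl fun i _ ↦
      (if_pos rfl).trans (gauge_gridPoint (hκ j) (NeZero.pos ℓ) _ _).symm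
  · exact fun j' _ hj' ↦ Finset.sum_eq_zero fun i _ ↦ if_neg hj'
  · exact fun h ↦ absurd (Finset.mem_univ j) h

theorem exists_simplex_forall_edge_ne [Fintype J] (hκ : ∀ j, 0 < κ j) (hg : ∀ j, 1 ≤ g j)
    (hℓ : ∀ j, ℓ = 2 * κ j * g j) (hm : m + 1 = 2 * ∑ j, n j) :
    ∃ τ : ℕ → J, ∀ c : ℕ → (∀ j, SP (n j) (Ng (g j))) → ZMod 2,
      ∃ w : Simplex ((j : J) × Fin (n j)) ℓ m, ∀ t ≤ m,
        c t (prodPolar n g (vertex (κ ∘ Sigma.fst) w t)) +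
            ∑ i, gauge (vertex (κ ∘ Sigma.fst) w t ⟨τ t, i⟩) ≠
          c t (prodPolar n g (vertex (κ ∘ Sigma.fst) w (t + 1))) +
            ∑ i, gauge (vertex (κ ∘ Sigma.fst) w (t + 1) ⟨τ t, i⟩) := by
  classical
  have hdvd (j : J) : 2 * κ j ∣ ℓ := Dvd.intro _ (hℓ j).symm
  have hcard : Fintype.card ((j : J) × Fin (n j)) = ∑ j, n j := by simp
  have : Nonempty ((j : J) × Fin (n j)) := Fintype.card_pos_iff.1 (by lia)
  obtain ⟨τ, w₀, hw₀⟩ := Simplex.exists_isMatched (ℓ := ℓ) (m := m) (κ ∘ Sigma.fst) Sigma.fst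
    (fun a : (j : J) × Fin (n j) ↦ hκ a.1) (fun a ↦ Nat.le_of_dvd (NeZero.pos ℓ) (hdvd a.1))
    (hcard ▸ hm)
  refine ⟨τ, fun c ↦ ?_⟩
  have hsum := SimplexCycle.sum_prod_edgeDiff_add (c := fun t b s ↦ c t (classPoint g κ b s))
    (fun t ↦ isCocyclePotential_gaugeSum hκ hdvd hg hℓ (τ t))
    (fun t ↦ isVertexFunction_comp_classPoint (m := m) hκ hdvd hg hℓ (c t))
  rw [SimplexClass.sum_prod_edgeDiff_gaugeSum hκ hdvd (hcard ▸ hm) hw₀] at hsum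
  obtain ⟨⟨w⟩, -, hw⟩ := Finset.exists_ne_zero_of_sum_ne_zero (hsum.trans_ne one_ne_zero)
  refine ⟨w, fun t ht heq ↦ Finset.prod_ne_zero_iff.1 hw t (Finset.mem_range.2 (by lia)) ?_⟩
  rw [← gaugeSum_eq_sum_gauge hκ, ← gaugeSum_eq_sum_gauge hκ] at heq
  refine (congrArg₂ (· + ·) (add_comm _ _) (add_comm _ _)).trans
    ((congrArg (· + _) heq).trans (CharTwo.add_self_eq_zero _))

end classPoint

end Ng

/-! ### The category of the products -/

namespace Ng

variable {J : Type*} {n g : J → ℕ}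

lemma exists_subdivision [Finite J] (hg : ∀ j, 1 ≤ g j) {δ : ℝ} (hδ : 0 < δ) :
    ∃ (ℓ : ℕ) (κ : J → ℕ), 0 < ℓ ∧ ∀ j, 0 < κ j ∧ ℓ = 2 * κ j * g j ∧ 1 / (2 * κ j) < δ := by
  have := Fintype.ofFinite J
  classical
  obtain ⟨k, hk⟩ := exists_nat_one_div_lt hδ
  have hprod (s : Finset J) : 0 < ∏ i ∈ s, g i := Finset.prod_pos fun j _ ↦ hg j
  refine ⟨2 * ((k + 1) * ∏ i, g i), fun j ↦ (k + 1) * ∏ i ∈ Finset.univ.erase j, g i,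
    Nat.mul_pos two_pos (Nat.mul_pos k.succ_pos (hprod _)),
    fun j ↦ ⟨Nat.mul_pos k.succ_pos (hprod _), ?_, lt_of_le_of_lt ?_ hk⟩⟩
  · rw [← Finset.prod_erase_mul _ _ (Finset.mem_univ j)]
    ring
  · have : (1 : ℝ) ≤ ∏ i ∈ Finset.univ.erase j, g i := by exact_mod_cast hprod _
    push_cast at this ⊢
    gcongr
    nlinarith [k.cast_nonneg (α := ℝ)]

variable [Fintype J]

theorem two_mul_sum_le_of_catLE_prod_SP (hg : ∀ j, 1 ≤ g j) {r : ℕ}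
    (h : catLE (∀ j, SP (n j) (Ng (g j))) r) : 2 * ∑ j, n j ≤ r := by
  by_contra! hr
  obtain ⟨m, hm⟩ : ∃ m, m + 1 = 2 * ∑ j, n j := ⟨2 * ∑ j, n j - 1, by lia⟩
  obtain ⟨U, hUo, hUc, hUn⟩ := h
  choose c hc using fun j i ↦ exists_gauge_sum_correction n hg j (hUn i)
  let R : Set ((j : J) × Fin (n j) → ℝ × ℝ) := Set.univ.pi fun a ↦ rect (g a.1)
  obtain ⟨δ, hδ, hball⟩ := lebesgue_number_lemma_of_metric (s := R)
    (isCompact_univ_pi fun a ↦ isCompact_rect)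
    (fun i ↦ (hUo i).preimage (continuous_prodPolar n))
    (fun z _ ↦ by simpa using Set.eq_univ_iff_forall.1 hUc (prodPolar n g z))
  obtain ⟨ℓ, κ, hℓ, hκ⟩ := exists_subdivision hg hδ
  have : NeZero ℓ := ⟨hℓ.ne'⟩
  obtain ⟨τ, hτ⟩ := exists_simplex_forall_edge_ne (fun j ↦ (hκ j).1) hg (fun j ↦ (hκ j).2.1) hm
  obtain ⟨w, hw⟩ := hτ fun t ↦ c (τ t) (Fin.ofNat (r + 1) t)
  have hκℓ (a : (j : J) × Fin (n j)) : (κ ∘ Sigma.fst) a ≤ ℓ := by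
    have := Nat.mul_le_mul_left (κ a.1) (hg a.1)
    have := (hκ a.1).2.1
    simp only [Function.comp_apply]
    lia
  let z := vertex (κ ∘ Sigma.fst) w
  have hzR (b : ℕ) : z b ∈ R := fun a _ ↦
    vertex_mem_rect (κ := κ ∘ Sigma.fst) (hκ a.1).1 (hκ a.1).2.1 w b
  have hz (b : ℕ) : z b ∈ Metric.ball (z 0) δ ∩ R := by
    refine ⟨(dist_pi_lt_iff hδ).2 fun a ↦ (dist_vertex_le w b 0 a (hκℓ a) (hκ a.1).1).trans_lt
      (hκ a.1).2.2, hzR b⟩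
  have hconvex : Convex ℝ (Metric.ball (z 0) δ ∩ R) := (convex_ball _ _).inter <|
    convex_pi fun a _ ↦ (convex_Icc 0 1).prod (convex_Icc 0 _)
  obtain ⟨i, hi⟩ := hball (z 0) (hzR 0)
  refine hw i (by have := i.isLt; lia) ?_
  have hofNat : Fin.ofNat (r + 1) i = i := Fin.ext (Nat.mod_eq_of_lt i.isLt)
  rw [hofNat]
  exact hc (τ i) i _ hconvex.isPreconnected (fun z hz a ↦ hz.2 a trivial) (fun z hz ↦ hi hz.1)
    _ (hz i) _ (hz (i + 1))

theorem LScat_prod_SP (n : J → ℕ) (hg : ∀ j, 1 ≤ g j) :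
    LScat (∀ j, SP (n j) (Ng (g j))) = (2 * ∑ j, n j : ℕ) :=
  LScat_eq_coe (catLE_prod_SP n hg) fun _ ↦ two_mul_sum_le_of_catLE_prod_SP hg

theorem LScat_SP (n : ℕ) {g : ℕ} (hg : 1 ≤ g) : LScat (SP n (Ng g)) = (2 * n : ℕ) := by
  rw [← LScat_congr (Homeomorph.funUnique (Fin 1) (SP n (Ng g))),
    LScat_prod_SP (fun _ : Fin 1 ↦ n) fun _ ↦ hg]
  simp

end Ng

/-- The family `{SPⁿ(N_g)}` is LS-logarithmic; in particular
`cat((SPⁿ(N_g))ᵐ) = m·cat(SPⁿ(N_g)) = 2mn`. -/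
theorem lsLogarithmic_SP_nonorientableSurfaces :
    (∀ (k : ℕ), 1 ≤ k → ∀ n g : Fin k → ℕ, (∀ j, 1 ≤ n j) → (∀ j, 1 ≤ g j) →
      LScat (∀ j : Fin k, SP (n j) (Ng (g j)))
        = ∑ j : Fin k, LScat (SP (n j) (Ng (g j)))) ∧
    (∀ m n g : ℕ, 1 ≤ m → 1 ≤ n → 1 ≤ g →
      LScat (Fin m → SP n (Ng g)) = (m : ℕ∞) * LScat (SP n (Ng g)) ∧
      LScat (Fin m → SP n (Ng g)) = ((2 * m * n : ℕ) : ℕ∞)) := by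
  refine ⟨fun k _ n g _ hg ↦ ?_, fun m n g _ _ hg ↦ ?_⟩
  · rw [Ng.LScat_prod_SP n hg, Finset.sum_congr rfl fun j _ ↦ Ng.LScat_SP (n j) (hg j),
      Finset.mul_sum]
    push_cast
    rfl
  · have hpow : LScat (Fin m → SP n (Ng g)) = ((2 * m * n : ℕ) : ℕ∞) := by
      rw [Ng.LScat_prod_SP (fun _ : Fin m ↦ n) fun _ ↦ hg]
      simp [mul_assoc]
    refine ⟨?_, hpow⟩
    rw [hpow, Ng.LScat_SP n hg]
    push_cast
    ring

end
end

section
/- Let A be a commutative ℚ-algebra, and let m ≥ 2 and n ≥ 1 be integers. Suppose x_1,…,x_{2n} ∈ A satisfy x_j² = 0 for each j and x_1x_2⋯x_{2n} ≠ 0. Then in the m-fold tensor power A^{⊗m} over ℚ, the product ∏_{j=1}^{2n} (x̄_j)^m equals ((m−1)·m!)^{2n} · (x_1x_2⋯x_{2n})^{⊗m}, and in particular this element is nonzero. -/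
open scoped unitInterval Topology
open MeasureTheory
noncomputable section

/-- The `m`-fold tensor power `A^{⊗m}` of a `ℚ`-algebra `A` over `ℚ`. -/
abbrev TPow (A : Type*) [CommRing A] [Algebra ℚ A] (m : ℕ) : Type _ :=
  PiTensorProduct ℚ (fun _ : Fin m => A)

/-- The `i`-th inclusion `ιᵢ : A → A^{⊗m}`, `a ↦ 1 ⊗ ⋯ ⊗ a ⊗ ⋯ ⊗ 1`
(with `a` in position `i`). -/
def iota {A : Type*} [CommRing A] [Algebra ℚ A] {m : ℕ} (i : Fin m) (a : A) : TPow A m :=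
  PiTensorProduct.tprod ℚ (Function.update (fun _ => (1 : A)) i a)

/-- `ā = Σ_{i=1}^{m-1} ιᵢ(a) - (m-1)·ιₘ(a) ∈ A^{⊗m}` (indices `0,…,m-1`: coefficient `1`
for `i < m-1` and `-(m-1)` for the last index). -/
def abar {A : Type*} [CommRing A] [Algebra ℚ A] {m : ℕ} (a : A) : TPow A m :=
  ∑ i : Fin m, (if (i : ℕ) = m - 1 then -((m : ℤ) - 1) else 1) • iota i a

/-- The pure tensor `a^{⊗m} = a ⊗ a ⊗ ⋯ ⊗ a ∈ A^{⊗m}`. -/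
def tpowEl {A : Type*} [CommRing A] [Algebra ℚ A] (m : ℕ) (a : A) : TPow A m :=
  PiTensorProduct.tprod ℚ (fun _ : Fin m => a)

/-!
In a sum of `k` commuting square-zero elements, the only monomial of degree `k` that survives is the
product of all of them, so the `k`-th power of the sum is `k!` times this product. Applied to the
`m` summands of `ā`, this gives `āᵐ = (1 - m) * m! • a^{⊗m}`, and `a ↦ a^{⊗m}` is multiplicative. A
pure tensor of nonzero vectors is nonzero because some product of linear functionals does not vanish
on it.
-/

section SquareZero

variable {ι : Type*}

theorem multinomial_eq_factorial_card {s : Finset ι} {k : ι → ℕ} (hk : ∀ i ∈ s, k i = 1) :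
    Nat.multinomial s k = s.card.factorial := by
  simp [Nat.multinomial, Finset.sum_congr rfl hk,
    Finset.prod_congr rfl fun i hi ↦ congrArg Nat.factorial (hk i hi)]

theorem exists_two_le_of_mem_piAntidiag_card [DecidableEq ι] {s : Finset ι} {k : ι → ℕ}
    (hk : k ∈ s.piAntidiag s.card) (hne : k ≠ fun i ↦ if i ∈ s then 1 else 0) :
    ∃ i ∈ s, 2 ≤ k i := by
  obtain ⟨hsum, hsupp⟩ := Finset.mem_piAntidiag.1 hk
  by_contra! hlt
  have eq_one : ∀ i ∈ s, k i = 1 :=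
    (Finset.sum_eq_sum_iff_of_le fun i hi ↦ Nat.le_of_lt_succ (hlt i hi)).1 (by simpa using hsum)
  refine hne (funext fun i ↦ ?_)
  by_cases hi : i ∈ s
  · simpa [hi] using eq_one i hi
  · simpa [hi] using mt (hsupp i) hi

theorem sum_pow_card_of_sq_eq_zero {R : Type*} [CommSemiring R] (s : Finset ι) (y : ι → R)
    (hy : ∀ i ∈ s, y i ^ 2 = 0) :
    (∑ i ∈ s, y i) ^ s.card = s.card.factorial * ∏ i ∈ s, y i := by
  classical
  let e : ι → ℕ := fun i ↦ if i ∈ s then 1 else 0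
  have he : ∀ i ∈ s, e i = 1 := fun i hi ↦ if_pos hi
  have he_mem : e ∈ s.piAntidiag s.card := by
    simp [e]
  have other_eq_zero : ∀ k ∈ s.piAntidiag s.card, k ≠ e → ∏ i ∈ s, y i ^ k i = 0 := by
    intro k hk hke
    obtain ⟨i, hi, two_le⟩ := exists_two_le_of_mem_piAntidiag_card hk hke
    exact Finset.prod_eq_zero hi (pow_eq_zero_of_le two_le (hy i hi))
  calc (∑ i ∈ s, y i) ^ s.card
      = ∑ k ∈ s.piAntidiag s.card, Nat.multinomial s k * ∏ i ∈ s, y i ^ k i :=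
        Finset.sum_pow_eq_sum_piAntidiag s y s.card
    _ = Nat.multinomial s e * ∏ i ∈ s, y i ^ e i :=
        Finset.sum_eq_single_of_mem e he_mem fun k hk hke ↦ by
          rw [other_eq_zero k hk hke, mul_zero]
    _ = s.card.factorial * ∏ i ∈ s, y i := by
        rw [multinomial_eq_factorial_card he,
          Finset.prod_congr rfl fun i hi ↦ by rw [he i hi, pow_one]]

end SquareZero

theorem tprod_ne_zero {ι R : Type*} [Finite ι] [CommSemiring R] [Nontrivial R] [NoZeroDivisors R]
    {M : ι → Type*} [∀ i, AddCommMonoid (M i)] [∀ i, Module R (M i)]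
    [∀ i, Module.Projective R (M i)] {v : ∀ i, M i} (hv : ∀ i, v i ≠ 0) :
    PiTensorProduct.tprod R v ≠ 0 := by
  have := Fintype.ofFinite ι
  choose f hf using fun i ↦ Module.Projective.exists_dual_ne_zero R (hv i)
  have eval_ne_zero : PiTensorProduct.dualDistrib (PiTensorProduct.tprod R f)
      (PiTensorProduct.tprod R v) ≠ 0 := by
    rw [PiTensorProduct.dualDistrib_apply]
    exact Finset.prod_ne_zero_iff.2 fun i _ ↦ hf i
  intro hzero
  exact eval_ne_zero (by rw [hzero, map_zero])

section TensorPower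

variable {A κ : Type*} [CommRing A] [Algebra ℚ A] {m : ℕ}

theorem iota_eq_singleAlgHom (i : Fin m) (a : A) :
    iota i a = PiTensorProduct.singleAlgHom (R := ℚ) i a :=
  rfl

theorem prod_iota (a : A) : ∏ i : Fin m, iota i a = tpowEl m a :=
  calc ∏ i : Fin m, iota i a
      = PiTensorProduct.tprod ℚ (∏ i : Fin m, Pi.mulSingle i a) :=
        (PiTensorProduct.tprod_prod _ _).symm
    _ = tpowEl m a := congrArg _ (Finset.univ_prod_mulSingle fun _ ↦ a)

theorem tpowEl_prod (s : Finset κ) (x : κ → A) :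
    tpowEl m (∏ j ∈ s, x j) = ∏ j ∈ s, tpowEl m (x j) :=
  map_prod ((PiTensorProduct.tprodMonoidHom ℚ).comp (Pi.constMonoidHom (Fin m) A)) x s

theorem prod_abar_coeff (m : ℕ) :
    ∏ i : Fin m, (if (i : ℕ) = m - 1 then -((m : ℤ) - 1) else 1) = 1 - m := by
  cases m with
  | zero => simp
  | succ k => simp [Fin.prod_univ_castSucc, Nat.ne_of_lt]

theorem abar_pow {a : A} (ha : a ^ 2 = 0) :
    abar a ^ m = ((1 - m) * m.factorial : ℚ) • tpowEl m a := by
  let y : Fin m → TPow A m := fun i ↦ (if (i : ℕ) = m - 1 then -((m : ℤ) - 1) else 1) • iota i a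
  have y_sq : ∀ i, y i ^ 2 = 0 := fun i ↦ by
    rw [smul_pow, iota_eq_singleAlgHom, ← map_pow, ha, map_zero, smul_zero]
  have prod_y : ∏ i, y i = (1 - m : ℤ) • tpowEl m a := by
    rw [Finset.prod_smul, prod_abar_coeff, prod_iota]
  calc abar a ^ m
      = (m.factorial : TPow A m) * ∏ i, y i := by
        simpa [abar, y] using sum_pow_card_of_sq_eq_zero Finset.univ y fun i _ ↦ y_sq i
    _ = ((1 - m) * m.factorial : ℚ) • tpowEl m a := by
        rw [prod_y, ← nsmul_eq_mul, ← Nat.cast_smul_eq_nsmul ℚ, ← Int.cast_smul_eq_zsmul ℚ,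
          smul_smul]
        push_cast
        rw [mul_comm]

theorem prod_abar_pow (s : Finset κ) {x : κ → A} (hx : ∀ j ∈ s, x j ^ 2 = 0) :
    ∏ j ∈ s, abar (x j) ^ m
      = ((1 - m) * m.factorial : ℚ) ^ s.card • tpowEl m (∏ j ∈ s, x j) := by
  rw [Finset.prod_congr rfl fun j hj ↦ abar_pow (hx j hj), Finset.prod_smul, Finset.prod_const,
    tpowEl_prod]

theorem prod_abar_pow_eq_general (hm : 2 ≤ m) (s : Finset κ) {x : κ → A}
    (hx : ∀ j ∈ s, x j ^ 2 = 0) (hprod : ∏ j ∈ s, x j ≠ 0) :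
    ∏ j ∈ s, abar (x j) ^ m
        = (-1) ^ s.card * ((((m - 1) * m.factorial) ^ s.card : ℕ) : TPow A m)
          * tpowEl m (∏ j ∈ s, x j)
      ∧ ∏ j ∈ s, abar (m := m) (x j) ^ m ≠ 0 := by
  rw [prod_abar_pow s hx]
  constructor
  · rw [Algebra.smul_def, ← neg_sub (m : ℚ) 1, ← Nat.cast_pred (zero_lt_two.trans_le hm),
      neg_mul, neg_pow]
    simp
  · have coeff_ne_zero : ((1 - m) * m.factorial : ℚ) ≠ 0 :=
      mul_ne_zero (sub_ne_zero.2 <| by exact_mod_cast (Nat.lt_of_succ_le hm).ne)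
        (by exact_mod_cast m.factorial_ne_zero)
    exact smul_ne_zero (pow_ne_zero _ coeff_ne_zero) (tprod_ne_zero fun _ ↦ hprod)

end TensorPower

/-- If `x₁,…,x_{2n}` square to zero and have nonzero product, then in `A^{⊗m}` the
product `∏ⱼ (x̄ⱼ)ᵐ` equals `((m-1)·m!)^{2n} · (x₁⋯x_{2n})^{⊗m} ≠ 0`. -/
theorem prod_abar_pow_eq {A : Type*} [CommRing A] [Algebra ℚ A] (m n : ℕ)
    (hm : 2 ≤ m) (hn : 1 ≤ n)
    (x : Fin (2 * n) → A) (hx : ∀ j, x j ^ 2 = 0) (hprod : (∏ j, x j) ≠ 0) :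
    (∏ j, (abar (m := m) (x j)) ^ m)
        = ((((m - 1) * Nat.factorial m) ^ (2 * n) : ℕ) : TPow A m) * tpowEl m (∏ j, x j)
      ∧ (∏ j, (abar (m := m) (x j)) ^ m) ≠ 0 := by
  simpa using prod_abar_pow_eq_general hm Finset.univ (fun j _ ↦ hx j) hprod

end
end
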